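/- arXiv:2104.11836 — 4 statements merged into one kernel-verified Lean document; each statement's English description precedes it below -/
import Mathlib

section
/- (Green's general hyperplane restriction theorem) Let R be a standard graded algebra over an infinite field K and let d be a positive integer. Then for a general linear form l of R one has dim_K (R/lR)_d ≤ (dim_K R_d)_{⟨d⟩}; that is, there exists a nonempty Zariski open subset U ⊆ 𝔸(R_1) such that for every linear form l ∈ U the inequality dim_K (R/lR)_d ≤ (dim_K R_d)_{⟨d⟩} holds. -/
/-- Polynomial functions on a `K`-vector space `V`: the subalgebra of `V → K`
generated by the linear functionals. -/
def polyFuns (K V : Type*) [Field K] [AddCommGroup V] [Module K V] : Subalgebra K (V → K) :=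
  Algebra.adjoin K {f : V → K | ∃ φ : V →ₗ[K] K, ⇑φ = f}

/-- A subset of (the affine space of) a `K`-vector space is Zariski closed if it is the
common zero locus of a family of polynomial functions. -/
def IsZClosed (K : Type*) {V : Type*} [Field K] [AddCommGroup V] [Module K V]
    (Z : Set V) : Prop :=
  ∃ S : Set (V → K), (∀ f ∈ S, f ∈ polyFuns K V) ∧ Z = {v | ∀ f ∈ S, f v = 0}

/-- A subset is Zariski open if its complement is Zariski closed. -/
def IsZOpen (K : Type*) {V : Type*} [Field K] [AddCommGroup V] [Module K V]
    (U : Set V) : Prop :=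
  IsZClosed K Uᶜ

/-- An irreducible variety: a nonempty Zariski closed set which is not the union of two
proper closed subsets. -/
def IsIrredVariety (K : Type*) {V : Type*} [Field K] [AddCommGroup V] [Module K V]
    (W : Set V) : Prop :=
  IsZClosed K W ∧ W.Nonempty ∧
    ∀ Z₁ Z₂ : Set V, IsZClosed K Z₁ → IsZClosed K Z₂ → W ⊆ Z₁ ∪ Z₂ → (W ⊆ Z₁ ∨ W ⊆ Z₂)

/-- Auxiliary recursion for `wordIdeal`: letters are booleans, `true` standing for the
letter `c` (colon) and `false` for the letter `s` (sum). The natural number argument keeps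
track of which linear form is to be used next (0-indexed). -/
def wordIdealAux {R : Type*} [CommRing R] (l : ℕ → R) : ℕ → Ideal R → List Bool → Ideal R
  | _, I, [] => I
  | j, I, a :: o =>
      wordIdealAux l (j + 1)
        (if a then I.colon (Ideal.span {l j}) else I ⊔ Ideal.span {l j}) o

/-- The ideal `I_{l,o}` attached to a sequence of (linear) forms `l` and a word `o` in the
letters `{c, s}` (here `c = true`, `s = false`): starting from `(0)`, the `j`-th letter
either colons (`c`) or adds (`s`) the `j`-th form. -/
def wordIdeal {R : Type*} [CommRing R] (l : ℕ → R) (o : List Bool) : Ideal R :=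
  wordIdealAux l 0 ⊥ o

/-- The degree `d` component `I ∩ R_d` of an ideal `I`, as a `K`-subspace of `𝒜 d`. -/
def homComp {K R : Type*} [Field K] [CommRing R] [Algebra K R]
    (𝒜 : ℕ → Submodule K R) (I : Ideal R) (d : ℕ) : Submodule K (𝒜 d) :=
  Submodule.comap (𝒜 d).subtype (Submodule.restrictScalars K I)

/-- `dim_K (I)_d`, the dimension of the degree `d` component of the (homogeneous) ideal `I`. -/
noncomputable def homDim {K R : Type*} [Field K] [CommRing R] [Algebra K R]
    (𝒜 : ℕ → Submodule K R) (I : Ideal R) (d : ℕ) : ℕ :=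
  Module.finrank K (homComp 𝒜 I d)

/-- `dim_K (R/I)_d`, the dimension of the degree `d` component of `R/I` for a
(homogeneous) ideal `I`, computed as `dim 𝒜 d / (I ∩ 𝒜 d)`. -/
noncomputable def quotDim {K R : Type*} [Field K] [CommRing R] [Algebra K R]
    (𝒜 : ℕ → Submodule K R) (I : Ideal R) (d : ℕ) : ℕ :=
  Module.finrank K ((𝒜 d) ⧸ homComp 𝒜 I d)

/-- `macaulayDown c d = c_⟨d⟩`: if `c = C(k_d,d) + … + C(k_1,1)` is the `d`-th Macaulay
representation of `c`, then `c_⟨d⟩ = C(k_d - 1,d) + … + C(k_1 - 1,1)`; computed greedily. -/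
def macaulayDown : ℕ → ℕ → ℕ
  | _, 0 => 0
  | c, d + 1 =>
      let k := Nat.findGreatest (fun k => Nat.choose k (d + 1) ≤ c) (c + d + 1)
      Nat.choose (k - 1) (d + 1) + macaulayDown (c - Nat.choose k (d + 1)) d

/-- Property (Gr,d) for the linear forms `l 0, …, l (r-1)` (letters: `true = c`,
`false = s`): for every word `o` of length `i ≤ r`,
(1) if `m ⊄ I_o` and `i < r` then `l_{i+1} ∉ I_o`;
(2) if `i = r` and `|o|_c < d` then `m ⊆ I_o`;
(3) if `i ≤ r - 2` then `dim (I_{o,c,s})_{d - |o|_c - 1} ≤ dim (I_{o,s,c})_{d - |o|_c - 1}`. -/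
def GrProp {K R : Type*} [Field K] [CommRing R] [Algebra K R]
    (𝒜 : ℕ → Submodule K R) [GradedAlgebra 𝒜] (l : ℕ → R) (r d : ℕ) : Prop :=
  ∀ o : List Bool, o.length ≤ r →
    (¬ (HomogeneousIdeal.irrelevant 𝒜).toIdeal ≤ wordIdeal l o → o.length < r →
        l o.length ∉ wordIdeal l o) ∧
    (o.length = r → o.count true < d →
        (HomogeneousIdeal.irrelevant 𝒜).toIdeal ≤ wordIdeal l o) ∧
    (o.length + 2 ≤ r →
        homDim 𝒜 (wordIdeal l (o ++ [true, false])) (d - o.count true - 1) ≤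
          homDim 𝒜 (wordIdeal l (o ++ [false, true])) (d - o.count true - 1))

/-!
Fix a subspace `J` of `R_d`, put `c = dim R_d / J`, and let `l` be a linear form minimising
`h = dim R_d / (J + l R_{d-1})`. Multiplication by `l` embeds `R_{d-1} / (J : l)` in `R_d / J`
with cokernel `R_d / (J + l R_{d-1})`, so `(J : l)` has codimension `c - h` in `R_{d-1}`. By
induction, on `c` for `J + l R_{d-1}` and on `d` for `(J : l)`, and because two nonempty Zariski
open sets meet, one form `l'` satisfies Green's bound for both spaces. Reducing the embedding
modulo `l'` and using that `l` is minimal gives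
`h ≤ dim R_d / (J + l' R_{d-1}) ≤ h_⟨d⟩ + (c - h)_⟨d-1⟩`, and this forces `h ≤ c_⟨d⟩` by a purely
numerical argument. Since the dimension of a quotient by `l R_{d-1}` is upper semicontinuous in
`l`, one good form yields a nonempty open set of them.
-/

section MacaulayDown

theorem lt_choose_add_add_one (c d : ℕ) : c < (c + d + 1).choose (d + 1) := by
  induction d with
  | zero => simp
  | succ d ih =>
    rw [← add_assoc, Nat.choose_succ_succ']
    exact ih.trans_le (Nat.le_add_right _ _)

theorem findGreatest_choose_le_eq {c d k : ℕ} (hle : k.choose (d + 1) ≤ c)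
    (hlt : c < (k + 1).choose (d + 1)) :
    Nat.findGreatest (fun k => k.choose (d + 1) ≤ c) (c + d + 1) = k := by
  refine Nat.findGreatest_eq_iff.2 ⟨?_, fun _ => hle, fun n hkn _ hn => ?_⟩
  · by_contra! hk
    exact (lt_choose_add_add_one c d).not_ge ((Nat.choose_le_choose _ hk.le).trans hle)
  · exact hlt.not_ge ((Nat.choose_le_choose _ hkn).trans hn)

theorem exists_eq_choose_add {c : ℕ} (hc : c ≠ 0) (d : ℕ) :
    ∃ k c', d ≤ k ∧ c' < (k + 1).choose d ∧ c = (k + 1).choose (d + 1) + c' := by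
  have hex : ∃ j, c < (d + j + 2).choose (d + 1) :=
    ⟨c, (lt_choose_add_add_one c d).trans_le (Nat.choose_le_choose _ (by omega))⟩
  have hlt := Nat.find_spec hex
  have hle : (d + Nat.find hex + 1).choose (d + 1) ≤ c := by
    rcases hj : Nat.find hex with _ | j
    · simpa using Nat.one_le_iff_ne_zero.2 hc
    · exact not_lt.1 (Nat.find_min hex (m := j) (by omega))
  rw [Nat.choose_succ_succ'] at hlt
  exact ⟨d + Nat.find hex, c - (d + Nat.find hex + 1).choose (d + 1), by omega, by omega, by omega⟩

theorem macaulayDown_choose_add {c d k : ℕ} (hc : c < (k + 1).choose d) :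
    macaulayDown ((k + 1).choose (d + 1) + c) (d + 1) = k.choose (d + 1) + macaulayDown c d := by
  have hlt : (k + 1).choose (d + 1) + c < (k + 1 + 1).choose (d + 1) := by
    rw [Nat.choose_succ_succ' (k + 1)]
    omega
  simp only [macaulayDown, findGreatest_choose_le_eq (Nat.le_add_right _ c) hlt,
    Nat.add_sub_cancel, Nat.add_sub_cancel_left]

theorem macaulayDown_le_self (c d : ℕ) : macaulayDown c d ≤ c := by
  induction d generalizing c with
  | zero => exact Nat.zero_le c
  | succ d ih =>
    rw [macaulayDown]
    have hspec := Nat.findGreatest_spec (P := fun k => k.choose (d + 1) ≤ c)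
      (Nat.zero_le (c + d + 1)) (by simp)
    set k := Nat.findGreatest (fun k => k.choose (d + 1) ≤ c) (c + d + 1)
    calc (k - 1).choose (d + 1) + macaulayDown (c - k.choose (d + 1)) d
        ≤ k.choose (d + 1) + (c - k.choose (d + 1)) :=
          add_le_add (Nat.choose_le_choose _ k.pred_le) (ih _)
      _ = c := Nat.add_sub_of_le hspec

theorem macaulayDown_choose {d k : ℕ} (hdk : d ≤ k) :
    macaulayDown ((k + 1).choose (d + 1)) (d + 1) = k.choose (d + 1) := by
  have hpos : 0 < (k + 1).choose d := Nat.choose_pos (by omega)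
  simpa [Nat.le_zero.1 (macaulayDown_le_self 0 d)] using macaulayDown_choose_add hpos

theorem macaulayDown_lt_choose {c d k : ℕ} (hdk : d ≤ k) (hc : c < (k + 1).choose d) :
    macaulayDown c d < k.choose d := by
  induction d generalizing c k with
  | zero => simp [macaulayDown]
  | succ d ih =>
    rcases eq_or_ne c 0 with rfl | hc₀
    · exact (macaulayDown_le_self _ _).trans_lt (Nat.choose_pos hdk)
    obtain ⟨p, c', hdp, hc', rfl⟩ := exists_eq_choose_add hc₀ d
    have hpk : p + 1 ≤ k := by
      by_contra! hkp
      have := Nat.choose_le_choose (d + 1) (show k + 1 ≤ p + 1 by omega)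
      omega
    calc macaulayDown ((p + 1).choose (d + 1) + c') (d + 1)
        = p.choose (d + 1) + macaulayDown c' d := macaulayDown_choose_add hc'
      _ < p.choose (d + 1) + p.choose d := Nat.add_lt_add_left (ih hdp hc') _
      _ = (p + 1).choose (d + 1) := by rw [Nat.choose_succ_succ', add_comm]
      _ ≤ k.choose (d + 1) := Nat.choose_le_choose _ hpk

theorem macaulayDown_mono (d : ℕ) : Monotone (macaulayDown · d) := by
  induction d with
  | zero => exact monotone_const
  | succ d ih =>
    intro a b hab
    change macaulayDown a (d + 1) ≤ macaulayDown b (d + 1)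
    rcases eq_or_ne a 0 with rfl | ha
    · exact (macaulayDown_le_self 0 _).trans (Nat.zero_le _)
    obtain ⟨p, a', hdp, ha', rfl⟩ := exists_eq_choose_add ha d
    obtain ⟨q, b', hdq, hb', rfl⟩ := exists_eq_choose_add (by omega : b ≠ 0) d
    rw [macaulayDown_choose_add hb']
    rcases lt_trichotomy p q with hpq | rfl | hqp
    · have ha : (p + 1).choose (d + 1) + a' < (p + 1 + 1).choose (d + 1) := by
        rw [Nat.choose_succ_succ' (p + 1)]
        omega
      calc macaulayDown ((p + 1).choose (d + 1) + a') (d + 1)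
          ≤ (p + 1).choose (d + 1) := (macaulayDown_lt_choose (by omega) ha).le
        _ ≤ q.choose (d + 1) := Nat.choose_le_choose _ hpq
        _ ≤ _ := Nat.le_add_right _ _
    · rw [macaulayDown_choose_add ha']
      exact Nat.add_le_add_left (ih (by omega : a' ≤ b')) _
    · have := Nat.choose_le_choose (d + 1) (show q + 2 ≤ p + 1 by omega)
      rw [Nat.choose_succ_succ' (q + 1)] at this
      omega

theorem choose_add_le_macaulayDown {d k x y : ℕ} (hdk : d ≤ k) (hyx : y ≤ macaulayDown x d)
    (hyk : y ≤ k.choose d) :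
    k.choose (d + 1) + y ≤ macaulayDown ((k + 1).choose (d + 1) + x) (d + 1) := by
  rcases lt_or_ge x ((k + 1).choose d) with hx | hx
  · rw [macaulayDown_choose_add hx]
    exact Nat.add_le_add_left hyx _
  · calc k.choose (d + 1) + y ≤ (k + 1).choose (d + 1) := by
          rw [Nat.choose_succ_succ']
          omega
      _ = macaulayDown ((k + 2).choose (d + 1)) (d + 1) :=
          (macaulayDown_choose (by omega)).symm
      _ ≤ _ := macaulayDown_mono _ (by rw [Nat.choose_succ_succ' (k + 1)]; omega)

theorem le_macaulayDown_add_choose {d h k : ℕ} (hh : h < k.choose (d + 1)) :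
    h ≤ macaulayDown (h + k.choose d) (d + 1) := by
  induction d generalizing h k with
  | zero =>
    simpa using (macaulayDown_choose (d := 0) (k := h) (Nat.zero_le h)).ge
  | succ d ih =>
    rcases eq_or_ne h 0 with rfl | hh₀
    · exact Nat.zero_le _
    obtain ⟨p, h', hdp, hh', rfl⟩ := exists_eq_choose_add hh₀ (d + 1)
    have hpk : p + 1 < k := by
      by_contra! hkp
      have := Nat.choose_le_choose (d + 1 + 1) hkp
      omega
    have hk : (p + 1).choose (d + 1) + (p + 1).choose d ≤ k.choose (d + 1) := by
      rw [add_comm, ← Nat.choose_succ_succ']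
      exact Nat.choose_le_choose _ hpk
    calc (p + 1).choose (d + 1 + 1) + h'
        ≤ macaulayDown ((p + 1 + 1).choose (d + 1 + 1) + (h' + (p + 1).choose d)) (d + 1 + 1) :=
          choose_add_le_macaulayDown (by omega) (ih hh') hh'.le
      _ ≤ _ := macaulayDown_mono _ (by rw [Nat.choose_succ_succ' (p + 1)]; omega)

theorem le_macaulayDown_add {d h u : ℕ}
    (H : h ≤ macaulayDown h (d + 1) + macaulayDown u d) : h ≤ macaulayDown (h + u) (d + 1) := by
  induction d generalizing h u with
  | zero =>
    rcases eq_or_ne h 0 with rfl | hh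
    · exact Nat.zero_le _
    obtain ⟨k, h', -, hh', rfl⟩ := exists_eq_choose_add hh 0
    rw [macaulayDown_choose_add hh', Nat.choose_one_right, Nat.choose_one_right] at H
    simp only [macaulayDown] at H
    omega
  | succ d ih =>
    rcases eq_or_ne h 0 with rfl | hh
    · exact Nat.zero_le _
    obtain ⟨k, h', hdk, hh', rfl⟩ := exists_eq_choose_add hh (d + 1)
    suffices ∃ u', (k + 1).choose (d + 1) + u' ≤ u ∧ h' ≤ macaulayDown (h' + u') (d + 1) by
      obtain ⟨u', hu', hle⟩ := this
      calc (k + 1).choose (d + 1 + 1) + h'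
          ≤ macaulayDown ((k + 1 + 1).choose (d + 1 + 1) + (h' + u')) (d + 1 + 1) :=
            choose_add_le_macaulayDown (by omega) hle hh'.le
        _ ≤ _ := macaulayDown_mono _ (by rw [Nat.choose_succ_succ' (k + 1)]; omega)
    rw [macaulayDown_choose_add hh', Nat.choose_succ_succ' k (d + 1)] at H
    have hku : (k + 1).choose (d + 1) ≤ u := by
      by_contra! hu
      have := macaulayDown_lt_choose hdk hu
      have := macaulayDown_le_self h' (d + 1)
      omega
    obtain ⟨u', rfl⟩ := Nat.exists_eq_add_of_le hku
    rcases lt_or_ge u' ((k + 1).choose d) with hu' | hu'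
    · refine ⟨u', le_rfl, ih ?_⟩
      rw [macaulayDown_choose_add hu'] at H
      omega
    · exact ⟨(k + 1).choose d, Nat.add_le_add_left hu' _, le_macaulayDown_add_choose hh'⟩

end MacaulayDown

section Zariski

variable {K V W : Type*} [Field K] [AddCommGroup V] [Module K V] [AddCommGroup W] [Module K W]

theorem linearMap_mem_polyFuns (φ : V →ₗ[K] K) : ⇑φ ∈ polyFuns K V :=
  Algebra.subset_adjoin ⟨φ, rfl⟩

theorem det_mem_polyFuns {ι : Type*} [Fintype ι] [DecidableEq ι] {A : V → Matrix ι ι K}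
    (hA : ∀ i j, (fun v => A v i j) ∈ polyFuns K V) : (fun v => (A v).det) ∈ polyFuns K V := by
  have hdet : (fun v => (A v).det) =
      ∑ σ : Equiv.Perm ι, (Equiv.Perm.sign σ : ℤ) • ∏ i, fun v => A v (σ i) i := by
    ext v
    simp [Matrix.det_apply, Units.smul_def]
  rw [hdet]
  exact sum_mem fun σ _ => zsmul_mem (prod_mem fun i _ => hA _ _) _

theorem exists_polynomial_eval_eq_of_mem_polyFuns {f : V → K} (hf : f ∈ polyFuns K V)
    (u w : V) : ∃ P : Polynomial K, ∀ t, P.eval t = f (u + t • w) := by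
  induction hf using Algebra.adjoin_induction with
  | mem f hf =>
    obtain ⟨φ, rfl⟩ := hf
    exact ⟨.C (φ u) + .C (φ w) * .X, fun t => by simp [mul_comm t]⟩
  | algebraMap r => exact ⟨.C r, fun t => by simp⟩
  | add f g _ _ hf hg =>
    obtain ⟨P, hP⟩ := hf
    obtain ⟨Q, hQ⟩ := hg
    exact ⟨P + Q, fun t => by simp [hP, hQ]⟩
  | mul f g _ _ hf hg =>
    obtain ⟨P, hP⟩ := hf
    obtain ⟨Q, hQ⟩ := hg
    exact ⟨P * Q, fun t => by simp [hP, hQ]⟩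

theorem exists_ne_zero_of_mem_polyFuns [Infinite K] {f g : V → K} (hf : f ∈ polyFuns K V)
    (hg : g ∈ polyFuns K V) {u v : V} (hu : f u ≠ 0) (hv : g v ≠ 0) :
    ∃ w, f w ≠ 0 ∧ g w ≠ 0 := by
  obtain ⟨P, hP⟩ := exists_polynomial_eval_eq_of_mem_polyFuns hf u (v - u)
  obtain ⟨Q, hQ⟩ := exists_polynomial_eval_eq_of_mem_polyFuns hg u (v - u)
  have hP₀ : P ≠ 0 := by
    rintro rfl
    exact hu (by simpa using (hP 0).symm)
  have hQ₀ : Q ≠ 0 := by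
    rintro rfl
    exact hv (by simpa using (hQ 1).symm)
  obtain ⟨t, ht⟩ : ∃ t, (P * Q).eval t ≠ 0 := by
    by_contra! h
    exact mul_ne_zero hP₀ hQ₀ (Polynomial.funext fun t => by rw [h t, Polynomial.eval_zero])
  rw [Polynomial.eval_mul, hP, hQ] at ht
  exact ⟨_, left_ne_zero_of_mul ht, right_ne_zero_of_mul ht⟩

theorem isZOpen_iff_forall_mem {U : Set V} : IsZOpen K U ↔
    ∀ u ∈ U, ∃ p ∈ polyFuns K V, p u ≠ 0 ∧ ∀ v, p v ≠ 0 → v ∈ U := by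
  constructor
  · rintro ⟨S, hS, hU⟩ u hu
    obtain ⟨f, hf, hfu⟩ : ∃ f ∈ S, f u ≠ 0 := by
      by_contra! h
      exact hU.ge h hu
    exact ⟨f, hS f hf, hfu, fun v hv => not_not.1 fun hvU => hv (hU.le hvU f hf)⟩
  · intro h
    refine ⟨{p | p ∈ polyFuns K V ∧ ∀ v, p v ≠ 0 → v ∈ U}, fun f hf => hf.1, ?_⟩
    ext v
    constructor
    · exact fun hv f hf => not_not.1 fun hfv => hv (hf.2 v hfv)
    · intro hv hvU
      obtain ⟨p, hp, hpv, hpU⟩ := h v hvU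
      exact hpv (hv p ⟨hp, hpU⟩)

namespace IsZOpen

theorem iUnion {ι : Sort*} {U : ι → Set V} (hU : ∀ i, IsZOpen K (U i)) :
    IsZOpen K (⋃ i, U i) := by
  refine isZOpen_iff_forall_mem.2 fun u hu => ?_
  obtain ⟨i, hi⟩ := Set.mem_iUnion.1 hu
  obtain ⟨p, hp, hpu, hpU⟩ := isZOpen_iff_forall_mem.1 (hU i) u hi
  exact ⟨p, hp, hpu, fun v hv => Set.mem_iUnion_of_mem i (hpU v hv)⟩

theorem inter_nonempty [Infinite K] {U U' : Set V} (hU : IsZOpen K U) (hU' : IsZOpen K U')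
    (hne : U.Nonempty) (hne' : U'.Nonempty) : (U ∩ U').Nonempty := by
  obtain ⟨u, hu⟩ := hne
  obtain ⟨u', hu'⟩ := hne'
  obtain ⟨p, hp, hpu, hpU⟩ := isZOpen_iff_forall_mem.1 hU u hu
  obtain ⟨q, hq, hqu', hqU'⟩ := isZOpen_iff_forall_mem.1 hU' u' hu'
  obtain ⟨w, hpw, hqw⟩ := exists_ne_zero_of_mem_polyFuns hp hq hpu hqu'
  exact ⟨w, hpU w hpw, hqU' w hqw⟩

end IsZOpen

theorem isZOpen_setOf_linearIndependent {ι : Type*} [Finite ι] (f : ι → V →ₗ[K] W) :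
    IsZOpen K {v | LinearIndependent K fun i => f i v} := by
  classical
  cases nonempty_fintype ι
  refine isZOpen_iff_forall_mem.2 fun u (hu : LinearIndependent K fun i => f i u) => ?_
  obtain ⟨ψ, hψ⟩ := LinearMap.exists_leftInverse_of_injective _
    (LinearMap.ker_eq_bot.2 hu.fintypeLinearCombination_injective)
  have hψu (i : ι) : ψ (f i u) = Pi.single i 1 := by
    simpa [Fintype.linearCombination_apply_single] using LinearMap.congr_fun hψ (Pi.single i 1)
  refine ⟨fun v => (Matrix.of fun i => ψ (f i v)).det, ?_, ?_, fun v hv => ?_⟩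
  · exact det_mem_polyFuns fun i j => linearMap_mem_polyFuns (LinearMap.proj j ∘ₗ ψ ∘ₗ f i)
  · have hone : (Matrix.of fun i => ψ (f i u)) = 1 := by
      ext i j
      rw [Matrix.of_apply, hψu, Matrix.one_eq_pi_single]
    simp [hone]
  · exact LinearIndependent.of_comp ψ (Matrix.linearIndependent_rows_of_det_ne_zero hv)

theorem le_finrank_range_iff {n : ℕ} (g : V →ₗ[K] W) [FiniteDimensional K g.range] :
    n ≤ Module.finrank K g.range ↔ ∃ a : Fin n → V, LinearIndependent K (g ∘ a) := by
  constructor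
  · intro h
    obtain ⟨b, hb⟩ := exists_linearIndependent_of_le_finrank h
    choose a ha using fun i => (b i).2
    refine ⟨a, ?_⟩
    rw [show g ∘ a = g.range.subtype ∘ b from funext ha]
    exact hb.map' _ (Submodule.ker_subtype _)
  · rintro ⟨a, ha⟩
    have hrange : LinearIndependent K (g.rangeRestrict ∘ a) :=
      LinearIndependent.of_comp g.range.subtype ha
    simpa using hrange.fintype_card_le_finrank

theorem isZOpen_setOf_le_finrank_range {E : Type*} [AddCommGroup E] [Module K E]
    (f : V →ₗ[K] E →ₗ[K] W) [∀ v, FiniteDimensional K (f v).range] (n : ℕ) :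
    IsZOpen K {v | n ≤ Module.finrank K (f v).range} := by
  simp only [le_finrank_range_iff, Set.ofPred_exists]
  exact IsZOpen.iUnion fun a => isZOpen_setOf_linearIndependent fun i => f.flip (a i)

end Zariski

section RelCodim

variable {K M M' : Type*} [Field K] [AddCommGroup M] [Module K M] [AddCommGroup M'] [Module K M']

/-- The codimension of `J ⊓ N` in `N`. It is encoded as the dimension of the image of `N` in
`M ⧸ J`, so `J` need not be contained in `N`; it is `0` when that image is infinite-dimensional. -/
noncomputable def relCodim (J N : Submodule K M) : ℕ :=
  Module.finrank K (N.map J.mkQ)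

theorem finrank_map_add_finrank_inf_ker (f : M →ₗ[K] M') (S : Submodule K M)
    [FiniteDimensional K S] :
    Module.finrank K (S.map f) + Module.finrank K ↥(S ⊓ f.ker) = Module.finrank K S := by
  rw [← LinearMap.finrank_range_add_finrank_ker (f.domRestrict S), LinearMap.range_domRestrict,
    LinearMap.ker_domRestrict, ← Submodule.map_comap_subtype, Submodule.finrank_map_subtype_eq]

theorem relCodim_eq_finrank_quotient (J N : Submodule K M) :
    relCodim J N = Module.finrank K (N ⧸ J.comap N.subtype) := by
  have hker : (J.mkQ ∘ₗ N.subtype).ker = J.comap N.subtype := by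
    rw [LinearMap.ker_comp, Submodule.ker_mkQ]
  have hrange : (J.mkQ ∘ₗ N.subtype).range = N.map J.mkQ := by
    rw [LinearMap.range_comp, Submodule.range_subtype]
  rw [relCodim, ← hker, ← hrange]
  exact (LinearMap.quotKerEquivRange _).finrank_eq.symm

theorem relCodim_bot (N : Submodule K M) : relCodim ⊥ N = Module.finrank K N :=
  (Submodule.equivMapOfInjective _ (LinearMap.ker_eq_bot.1 (Submodule.ker_mkQ ⊥)) N).finrank_eq.symm

theorem relCodim_eq_zero_iff {J N : Submodule K M} [FiniteDimensional K (N.map J.mkQ)] :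
    relCodim J N = 0 ↔ N ≤ J := by
  rw [relCodim, Submodule.finrank_eq_zero, ← LinearMap.le_ker_iff_map, Submodule.ker_mkQ]

theorem map_factor_map_mkQ {J J' : Submodule K M} (hJ : J ≤ J') (N : Submodule K M) :
    (N.map J.mkQ).map (Submodule.factor hJ) = N.map J'.mkQ := by
  rw [← Submodule.map_comp, Submodule.factor_comp_mk]

theorem finiteDimensional_map_mkQ_of_le {J J' N : Submodule K M} (hJ : J ≤ J')
    [FiniteDimensional K (N.map J.mkQ)] : FiniteDimensional K (N.map J'.mkQ) := by
  rw [← map_factor_map_mkQ hJ]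
  infer_instance

theorem relCodim_anti {J J' N : Submodule K M} (hJ : J ≤ J')
    [FiniteDimensional K (N.map J.mkQ)] : relCodim J' N ≤ relCodim J N := by
  rw [relCodim, ← map_factor_map_mkQ hJ]
  exact Submodule.finrank_map_le _ _

theorem relCodim_sup_add_relCodim {J B N : Submodule K M} (hB : B ≤ N)
    [FiniteDimensional K (N.map J.mkQ)] :
    relCodim (J ⊔ B) N + relCodim J B = relCodim J N := by
  have hle : J ≤ J ⊔ B := le_sup_left
  have hker : N.map J.mkQ ⊓ (Submodule.factor hle).ker = B.map J.mkQ := by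
    have hmap : (J ⊔ B).map J.mkQ = B.map J.mkQ := by simp
    rw [Submodule.factor, Submodule.ker_mapQ, Submodule.comap_id, hmap]
    exact inf_eq_right.2 (Submodule.map_mono hB)
  have h := finrank_map_add_finrank_inf_ker (Submodule.factor hle) (N.map J.mkQ)
  rwa [map_factor_map_mkQ, hker] at h

/-- The isomorphism `A / (A ⊓ φ⁻¹ J) ≃ φ A / (φ A ⊓ J)` induced by `φ`, with both quotients
realised as images in `M' ⧸ φ⁻¹ J` and `M ⧸ J`. -/
noncomputable def mapMkQComapEquiv (φ : M' →ₗ[K] M) (J : Submodule K M) (A : Submodule K M') :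
    A.map (J.comap φ).mkQ ≃ₗ[K] (A.map φ).map J.mkQ :=
  have hinj : Function.Injective ((J.comap φ).mapQ J φ le_rfl) := by
    rw [← LinearMap.ker_eq_bot, Submodule.ker_mapQ]
    simp
  Submodule.equivMapOfInjective _ hinj _ ≪≫ₗ LinearEquiv.ofEq _ _ (by
    rw [← Submodule.map_comp, ← Submodule.map_comp, Submodule.mapQ_mkQ])

theorem relCodim_comap (φ : M' →ₗ[K] M) (J : Submodule K M) (A : Submodule K M') :
    relCodim (J.comap φ) A = relCodim J (A.map φ) :=
  (mapMkQComapEquiv φ J A).finrank_eq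

theorem finiteDimensional_map_mkQ_comap {φ : M' →ₗ[K] M} {J N : Submodule K M}
    {A : Submodule K M'} (hA : A.map φ ≤ N) [FiniteDimensional K (N.map J.mkQ)] :
    FiniteDimensional K (A.map (J.comap φ).mkQ) := by
  have : FiniteDimensional K ((A.map φ).map J.mkQ) :=
    Submodule.finiteDimensional_of_le (Submodule.map_mono hA)
  exact (mapMkQComapEquiv φ J A).symm.finiteDimensional

end RelCodim

section HyperplaneSection

open scoped Pointwise

variable {K R M : Type*} [Field K] [CommRing R] [Algebra K R] [AddCommGroup M] [Module K M]
  [Module R M] [IsScalarTower K R M]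

theorem smul_le_smul_of_mem {V : Submodule K R} {l : R} (hl : l ∈ V) (A : Submodule K M) :
    l • A ≤ V • A := by
  rintro _ ⟨a, ha, rfl⟩
  exact Submodule.smul_mem_smul hl ha

theorem isZOpen_setOf_relCodim_sup_smul_le (V : Submodule K R) (J A : Submodule K M)
    [FiniteDimensional K ((V • A).map J.mkQ)] (m : ℕ) :
    IsZOpen K {l : V | relCodim (J ⊔ (l : R) • A) (V • A) ≤ m} := by
  let f : V →ₗ[K] A →ₗ[K] M ⧸ J :=
    (((Algebra.lsmul K K M).toLinearMap.domRestrict V).compl₂ A.subtype).compr₂ J.mkQ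
  have hrange (l : V) : (f l).range = ((l : R) • A).map J.mkQ := by
    rw [show f l = J.mkQ ∘ₗ Algebra.lsmul K K M (l : R) ∘ₗ A.subtype from rfl,
      LinearMap.range_comp, LinearMap.range_comp, Submodule.range_subtype]
    rfl
  have hfin (l : V) : FiniteDimensional K (f l).range := by
    rw [hrange]
    exact Submodule.finiteDimensional_of_le (Submodule.map_mono (smul_le_smul_of_mem l.2 A))
  convert isZOpen_setOf_le_finrank_range f (relCodim J (V • A) - m) using 3 with l
  have hadd := relCodim_sup_add_relCodim (J := J) (smul_le_smul_of_mem l.2 A)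
  rw [hrange, ← relCodim]
  omega

theorem exists_relCodim_sup_smul_lt {V : Submodule K R} {J A : Submodule K M}
    [FiniteDimensional K ((V • A).map J.mkQ)] (hJ : relCodim J (V • A) ≠ 0) :
    ∃ l : V, relCodim (J ⊔ (l : R) • A) (V • A) < relCodim J (V • A) := by
  contrapose! hJ
  rw [relCodim_eq_zero_iff, Submodule.smul_le]
  intro l hl a ha
  have hlA := smul_le_smul_of_mem hl A
  have : FiniteDimensional K ((l • A).map J.mkQ) :=
    Submodule.finiteDimensional_of_le (Submodule.map_mono hlA)
  have hzero : relCodim J (l • A) = 0 := by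
    have := relCodim_sup_add_relCodim (J := J) hlA
    have : relCodim J (V • A) ≤ relCodim (J ⊔ l • A) (V • A) := hJ ⟨l, hl⟩
    omega
  exact relCodim_eq_zero_iff.1 hzero (Submodule.smul_mem_pointwise_smul a l A ha)

theorem relCodim_sup_smul_le_add {l l' : R} {J N A B : Submodule K M} (hA : l • A ≤ N)
    (hB : l • B ≤ A) [FiniteDimensional K (N.map J.mkQ)] :
    relCodim (J ⊔ l' • A) N ≤ relCodim (J ⊔ l • A ⊔ l' • A) N +
      relCodim (J.comap (Algebra.lsmul K K M l) ⊔ l' • B) A := by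
  have : FiniteDimensional K (N.map (J ⊔ l' • A).mkQ) :=
    finiteDimensional_map_mkQ_of_le le_sup_left
  have : FiniteDimensional K (A.map (J.comap (Algebra.lsmul K K M l)).mkQ) :=
    finiteDimensional_map_mkQ_comap hA
  have : FiniteDimensional K (A.map (J.comap (Algebra.lsmul K K M l) ⊔ l' • B).mkQ) :=
    finiteDimensional_map_mkQ_of_le le_sup_left
  have hcomap : J.comap (Algebra.lsmul K K M l) ⊔ l' • B ≤
      (J ⊔ l' • A).comap (Algebra.lsmul K K M l) := by
    refine sup_le (Submodule.comap_mono le_sup_left) ?_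
    rintro _ ⟨b, hb, rfl⟩
    refine Submodule.mem_sup_right ?_
    change l • l' • b ∈ l' • A
    rw [smul_comm]
    exact Submodule.smul_mem_pointwise_smul _ _ _ (hB (Submodule.smul_mem_pointwise_smul _ _ _ hb))
  calc relCodim (J ⊔ l' • A) N
      = relCodim (J ⊔ l' • A ⊔ l • A) N + relCodim (J ⊔ l' • A) (l • A) :=
        (relCodim_sup_add_relCodim hA).symm
    _ = relCodim (J ⊔ l • A ⊔ l' • A) N +
          relCodim ((J ⊔ l' • A).comap (Algebra.lsmul K K M l)) A := by
        rw [sup_right_comm, relCodim_comap]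
        rfl
    _ ≤ _ := Nat.add_le_add_left (relCodim_anti hcomap) _

theorem exists_relCodim_sup_smul_minimal (V : Submodule K R) (J A N : Submodule K M) :
    ∃ l : V, ∀ l' : V, relCodim (J ⊔ (l : R) • A) N ≤ relCodim (J ⊔ (l' : R) • A) N :=
  ⟨_, fun l' => Function.argmin_le (fun l : V => relCodim (J ⊔ (l : R) • A) N) l'⟩

theorem exists_relCodim_sup_smul_le_macaulayDown_one {V : Submodule K R} {J A : Submodule K M}
    [FiniteDimensional K ((V • A).map J.mkQ)] :
    ∃ l : V, relCodim (J ⊔ (l : R) • A) (V • A) ≤ macaulayDown (relCodim J (V • A)) 1 := by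
  rcases hc : relCodim J (V • A) with _ | c
  · exact ⟨0, (relCodim_anti le_sup_left).trans (hc.trans_le (Nat.zero_le _))⟩
  · obtain ⟨l, hl⟩ := exists_relCodim_sup_smul_lt (V := V) (J := J) (A := A) (by omega)
    have hdown : macaulayDown (c + 1) 1 = c := by
      simpa using macaulayDown_choose (Nat.zero_le c)
    exact ⟨l, by omega⟩

variable [Infinite K] {V : Submodule K R}

theorem relCodim_sup_smul_le_macaulayDown_of_minimal {J B : Submodule K M} {l : V} {d : ℕ}
    [FiniteDimensional K ((V • V • B).map J.mkQ)]
    (hmin : ∀ l' : V, relCodim (J ⊔ (l : R) • V • B) (V • V • B) ≤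
      relCodim (J ⊔ (l' : R) • V • B) (V • V • B))
    (hsup : ∃ l' : V, relCodim (J ⊔ (l : R) • V • B ⊔ (l' : R) • V • B) (V • V • B) ≤
      macaulayDown (relCodim (J ⊔ (l : R) • V • B) (V • V • B)) (d + 1))
    (hcolon : ∃ l' : V,
      relCodim (J.comap (Algebra.lsmul K K M (l : R)) ⊔ (l' : R) • B) (V • B) ≤
        macaulayDown (relCodim (J.comap (Algebra.lsmul K K M (l : R))) (V • B)) d) :
    relCodim (J ⊔ (l : R) • V • B) (V • V • B) ≤
      macaulayDown (relCodim J (V • V • B)) (d + 1) := by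
  have hlA : (l : R) • V • B ≤ V • V • B := smul_le_smul_of_mem l.2 _
  have : FiniteDimensional K ((V • V • B).map (J ⊔ (l : R) • V • B).mkQ) :=
    finiteDimensional_map_mkQ_of_le le_sup_left
  have : FiniteDimensional K ((V • B).map (J.comap (Algebra.lsmul K K M (l : R))).mkQ) :=
    finiteDimensional_map_mkQ_comap hlA
  obtain ⟨l', hsup', hcolon'⟩ := IsZOpen.inter_nonempty
    (isZOpen_setOf_relCodim_sup_smul_le V (J ⊔ (l : R) • V • B) (V • B) _)
    (isZOpen_setOf_relCodim_sup_smul_le V (J.comap (Algebra.lsmul K K M (l : R))) B _) hsup hcolon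
  have hc : relCodim (J ⊔ (l : R) • V • B) (V • V • B) +
      relCodim (J.comap (Algebra.lsmul K K M (l : R))) (V • B) = relCodim J (V • V • B) := by
    rw [relCodim_comap]
    exact relCodim_sup_add_relCodim hlA
  rw [← hc]
  refine le_macaulayDown_add ?_
  calc relCodim (J ⊔ (l : R) • V • B) (V • V • B)
      ≤ relCodim (J ⊔ (l' : R) • V • B) (V • V • B) := hmin l'
    _ ≤ _ := relCodim_sup_smul_le_add hlA (smul_le_smul_of_mem l.2 B)
    _ ≤ _ := add_le_add hsup' hcolon'

variable {N : ℕ → Submodule K M}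

theorem exists_relCodim_sup_smul_le_macaulayDown (hN : ∀ n, N (n + 1) = V • N n) (d : ℕ)
    (J : Submodule K M) [FiniteDimensional K ((N (d + 1)).map J.mkQ)] :
    ∃ l : V, relCodim (J ⊔ (l : R) • N d) (N (d + 1)) ≤
      macaulayDown (relCodim J (N (d + 1))) (d + 1) := by
  induction d generalizing J with
  | zero =>
    have : FiniteDimensional K ((V • N 0).map J.mkQ) := by
      rw [← hN]
      infer_instance
    rw [hN]
    exact exists_relCodim_sup_smul_le_macaulayDown_one
  | succ d ihd =>
    induction hc : relCodim J (N (d + 1 + 1)) using Nat.strong_induction_on generalizing J with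
    | _ c ihc =>
      subst hc
      obtain ⟨l, hmin⟩ := exists_relCodim_sup_smul_minimal V J (N (d + 1)) (N (d + 1 + 1))
      refine ⟨l, ?_⟩
      have hlA : (l : R) • N (d + 1) ≤ N (d + 1 + 1) :=
        (smul_le_smul_of_mem l.2 _).trans_eq (hN (d + 1)).symm
      have : FiniteDimensional K ((N (d + 1 + 1)).map (J ⊔ (l : R) • N (d + 1)).mkQ) :=
        finiteDimensional_map_mkQ_of_le le_sup_left
      have : FiniteDimensional K
          ((N (d + 1)).map (J.comap (Algebra.lsmul K K M (l : R))).mkQ) :=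
        finiteDimensional_map_mkQ_comap hlA
      rcases eq_or_ne (relCodim J (N (d + 1 + 1))) 0 with hzero | hne
      · exact (relCodim_anti le_sup_left).trans (hzero.trans_le (Nat.zero_le _))
      have hlt : relCodim (J ⊔ (l : R) • N (d + 1)) (N (d + 1 + 1)) <
          relCodim J (N (d + 1 + 1)) := by
        rw [hN (d + 1)] at *
        obtain ⟨l', hl'⟩ := exists_relCodim_sup_smul_lt hne
        exact (hmin l').trans_lt hl'
      have hsup := ihc _ hlt (J ⊔ (l : R) • N (d + 1)) rfl
      have hcolon := ihd (J.comap (Algebra.lsmul K K M (l : R)))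
      have : FiniteDimensional K ((V • V • N d).map J.mkQ) := by
        rw [← hN, ← hN]
        infer_instance
      simp only [hN (d + 1), hN d] at hmin hsup hcolon ⊢
      exact relCodim_sup_smul_le_macaulayDown_of_minimal hmin hsup hcolon

theorem green_general_hyperplane_restriction_general (hN : ∀ n, N (n + 1) = V • N n) (d : ℕ)
    (J : Submodule K M) [FiniteDimensional K ((N (d + 1)).map J.mkQ)] :
    ∃ U : Set V, IsZOpen K U ∧ U.Nonempty ∧ ∀ l ∈ U,
      relCodim (J ⊔ (l : R) • N d) (N (d + 1)) ≤
        macaulayDown (relCodim J (N (d + 1))) (d + 1) := by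
  refine ⟨_, ?_, exists_relCodim_sup_smul_le_macaulayDown hN d J, fun _ hl => hl⟩
  have : FiniteDimensional K ((V • N d).map J.mkQ) := by
    rw [← hN]
    infer_instance
  rw [hN]
  exact isZOpen_setOf_relCodim_sup_smul_le V J (N d) _

end HyperplaneSection

section StandardGraded

open scoped Pointwise

variable {K R : Type*} [Field K] [CommRing R] [Algebra K R] {𝒜 : ℕ → Submodule K R}

theorem finiteDimensional_of_eq_mul [FiniteDimensional K (𝒜 0)] [FiniteDimensional K (𝒜 1)]
    (hstd : ∀ n, 𝒜 (n + 1) = 𝒜 1 * 𝒜 n) (n : ℕ) : FiniteDimensional K (𝒜 n) := by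
  induction n with
  | zero => infer_instance
  | succ n ih =>
    rw [hstd, ← Submodule.fg_iff_finiteDimensional]
    exact ((Submodule.fg_iff_finiteDimensional _).2 ‹_›).mul
      ((Submodule.fg_iff_finiteDimensional _).2 ih)

theorem quotDim_span_singleton_le (l : R) (A : Submodule K R) (d : ℕ)
    [FiniteDimensional K (𝒜 d)] :
    quotDim 𝒜 (Ideal.span {l}) d ≤ relCodim (l • A) (𝒜 d) := by
  have hle : l • A ≤ (Ideal.span {l}).restrictScalars K := by
    rintro _ ⟨a, -, rfl⟩
    exact Ideal.mul_mem_right a _ (Ideal.mem_span_singleton_self l)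
  exact (relCodim_eq_finrank_quotient _ _).symm.trans_le (relCodim_anti hle)

end StandardGraded

/-- **Green's general hyperplane restriction theorem.**
`R` a standard graded algebra over an infinite field `K` (grading `𝒜`, `𝒜 0 = K·1`,
generated in degree one with `R_1` finite dimensional), `d > 0`.  There is a nonempty
Zariski open set `U ⊆ 𝔸(R_1)` such that every linear form `l ∈ U` satisfies
`dim_K (R/lR)_d ≤ (dim_K R_d)_⟨d⟩`. -/
theorem green_general_hyperplane_restriction
    {K R : Type*} [Field K] [Infinite K] [CommRing R] [Algebra K R]
    (𝒜 : ℕ → Submodule K R) [GradedAlgebra 𝒜]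
    (h0 : 𝒜 0 = (1 : Submodule K R)) (hstd : ∀ n, 𝒜 (n + 1) = 𝒜 1 * 𝒜 n)
    [FiniteDimensional K (𝒜 1)] (d : ℕ) (hd : 0 < d) :
    ∃ U : Set (𝒜 1), IsZOpen K U ∧ U.Nonempty ∧
      ∀ l ∈ U, quotDim 𝒜 (Ideal.span {(l : R)}) d ≤
        macaulayDown (Module.finrank K (𝒜 d)) d := by
  obtain ⟨e, rfl⟩ := Nat.exists_eq_add_one.2 hd
  have : FiniteDimensional K (𝒜 0) := by
    rw [h0, Submodule.one_eq_span]
    infer_instance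
  have := finiteDimensional_of_eq_mul hstd (e + 1)
  obtain ⟨U, hU, hne, hle⟩ := green_general_hyperplane_restriction_general hstd e ⊥
  refine ⟨U, hU, hne, fun l hl => (quotDim_span_singleton_le _ (𝒜 e) _).trans ?_⟩
  simpa only [bot_sup_eq, relCodim_bot] using hle l hl
end

section
/- Let R be a standard graded algebra over a field K with n = dim_K R_1, let d > 0 be a degree, and let l_1,…,l_r be linear forms of R with r ≥ n + d − 1. If l_1,…,l_r satisfy condition (1) of property (Gr,d) (for every word o = o_1,…,o_i with i < r, if m ⊄ I_o then l_{i+1} ∉ I_o), then l_1,…,l_r generate the homogeneous maximal ideal m and satisfy condition (2) of (Gr,d): for every word o of length r with |o|_c < d one has m ⊆ I_o. -/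
/-!
If `m ⊄ I_o`, the same holds for every prefix of `o`, so condition (1) says that each letter `s`
of `o` adds a linear form that is not yet in the ideal. Letters `c` never shrink the ideal, hence
`(I_o)_1` has dimension at least the number of letters `s` of `o`. A word of length
`r ≥ n + d - 1` with fewer than `d` letters `c` has at least `n` letters `s`, so
`(I_o)_1 = R_1`, which generates `m`: a contradiction. The word `s ⋯ s` gives the generation of `m`.
-/

section WordIdeal

variable {R : Type*} [CommRing R] (l : ℕ → R)

theorem wordIdealAux_append (j : ℕ) (I : Ideal R) (o o' : List Bool) :
    wordIdealAux l j I (o ++ o') = wordIdealAux l (j + o.length) (wordIdealAux l j I o) o' := by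
  induction o generalizing j I with
  | nil => rfl
  | cons a o ih => rw [List.cons_append, wordIdealAux, ih, wordIdealAux, List.length_cons,
      Nat.add_right_comm, Nat.add_assoc]

theorem le_wordIdealAux (j : ℕ) (I : Ideal R) (o : List Bool) : I ≤ wordIdealAux l j I o := by
  induction o generalizing j I with
  | nil => exact le_rfl
  | cons a o ih =>
    refine le_trans ?_ (ih (j + 1) _)
    cases a
    · exact le_sup_left
    · exact Ideal.le_colon

theorem wordIdeal_append (o o' : List Bool) :
    wordIdeal l (o ++ o') = wordIdealAux l o.length (wordIdeal l o) o' := by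
  rw [wordIdeal, wordIdealAux_append, Nat.zero_add, wordIdeal]

theorem wordIdeal_concat_false (o : List Bool) :
    wordIdeal l (o ++ [false]) = wordIdeal l o ⊔ Ideal.span {l o.length} :=
  wordIdeal_append l o [false]

theorem wordIdeal_le_of_prefix {o o' : List Bool} (h : o <+: o') :
    wordIdeal l o ≤ wordIdeal l o' := by
  obtain ⟨t, rfl⟩ := h
  rw [wordIdeal_append]
  exact le_wordIdealAux l _ _ t

theorem wordIdeal_replicate_false (r : ℕ) :
    wordIdeal l (List.replicate r false) = Ideal.span (l '' Set.Iio r) := by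
  induction r with
  | zero => simp [wordIdeal, wordIdealAux]
  | succ r ih =>
    rw [List.replicate_succ', wordIdeal_concat_false, ih, List.length_replicate,
      Set.Iio_add_one_eq_Iic, ← Set.Iio_insert, Set.image_insert_eq, Ideal.span_insert, sup_comm]

end WordIdeal

section Graded

variable {K R : Type*} [Field K] [CommRing R] [Algebra K R] (𝒜 : ℕ → Submodule K R)

theorem homComp_mono (e : ℕ) : Monotone fun I : Ideal R => homComp 𝒜 I e :=
  fun _ _ hIJ _ hx => hIJ hx

theorem homDim_mono (e : ℕ) [FiniteDimensional K (𝒜 e)] :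
    Monotone fun I : Ideal R => homDim 𝒜 I e :=
  fun _ _ hIJ => Submodule.finrank_mono (homComp_mono 𝒜 e hIJ)

theorem homDim_lt_homDim_sup_span_singleton {e : ℕ} [FiniteDimensional K (𝒜 e)] {I : Ideal R}
    {x : R} (hx : x ∈ 𝒜 e) (hxI : x ∉ I) : homDim 𝒜 I e < homDim 𝒜 (I ⊔ Ideal.span {x}) e := by
  refine Submodule.finrank_lt_finrank_of_lt
    (SetLike.lt_iff_le_and_exists.2 ⟨homComp_mono 𝒜 e le_sup_left, ⟨x, hx⟩, ?_, hxI⟩)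
  exact Ideal.mem_sup_right (Ideal.mem_span_singleton_self x)

theorem count_false_le_homDim_wordIdeal {e : ℕ} [FiniteDimensional K (𝒜 e)] {l : ℕ → R}
    {o : List Bool} (hl : ∀ j < o.length, l j ∈ 𝒜 e)
    (hnew : ∀ p, p ++ [false] <+: o → l p.length ∉ wordIdeal l p) :
    o.count false ≤ homDim 𝒜 (wordIdeal l o) e := by
  induction o using List.reverseRecOn with
  | nil => exact Nat.zero_le _
  | append_singleton o a ih =>
    have hlen : o.length < (o ++ [a]).length := by simp
    have ih : o.count false ≤ homDim 𝒜 (wordIdeal l o) e :=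
      ih (fun j hj => hl j (hj.trans hlen)) fun p hp => hnew p (hp.trans (o.prefix_append [a]))
    cases a with
    | false =>
      rw [List.count_append, List.count_singleton_self, wordIdeal_concat_false]
      exact ih.trans_lt
        (homDim_lt_homDim_sup_span_singleton 𝒜 (hl _ hlen) (hnew o List.prefix_rfl))
    | true =>
      calc (o ++ [true]).count false = o.count false := by simp
        _ ≤ homDim 𝒜 (wordIdeal l o) e := ih
        _ ≤ homDim 𝒜 (wordIdeal l (o ++ [true])) e :=
          homDim_mono 𝒜 e (wordIdeal_le_of_prefix l (o.prefix_append [true]))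

variable [GradedAlgebra 𝒜]

theorem irrelevant_le_of_degree_one_le (hstd : ∀ n, 𝒜 (n + 1) = 𝒜 1 * 𝒜 n) {I : Ideal R}
    (hI : 𝒜 1 ≤ I.restrictScalars K) : (HomogeneousIdeal.irrelevant 𝒜).toIdeal ≤ I := by
  refine (HomogeneousIdeal.toIdeal_irrelevant_le 𝒜).2 fun i hi x hx => ?_
  obtain ⟨n, rfl⟩ := Nat.exists_eq_add_one.2 hi
  have hmul : 𝒜 1 * 𝒜 n ≤ I.restrictScalars K :=
    Submodule.mul_le.2 fun a ha b _ => I.mul_mem_right b (hI ha)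
  exact hmul (hstd n ▸ hx)

theorem irrelevant_le_of_finrank_le_homDim_one (hstd : ∀ n, 𝒜 (n + 1) = 𝒜 1 * 𝒜 n)
    [FiniteDimensional K (𝒜 1)] {I : Ideal R} (hI : Module.finrank K (𝒜 1) ≤ homDim 𝒜 I 1) :
    (HomogeneousIdeal.irrelevant 𝒜).toIdeal ≤ I := by
  have htop : homComp 𝒜 I 1 = ⊤ :=
    Submodule.eq_top_of_finrank_eq (le_antisymm (Submodule.finrank_le _) hI)
  exact irrelevant_le_of_degree_one_le 𝒜 hstd (Submodule.comap_subtype_eq_top.1 htop)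

theorem irrelevant_le_wordIdeal_of_finrank_le_count_false
    (hstd : ∀ n, 𝒜 (n + 1) = 𝒜 1 * 𝒜 n) [FiniteDimensional K (𝒜 1)] {l : ℕ → R} {o : List Bool}
    (hl : ∀ j < o.length, l j ∈ 𝒜 1)
    (hnew : ∀ p, p ++ [false] <+: o → ¬ (HomogeneousIdeal.irrelevant 𝒜).toIdeal ≤ wordIdeal l p →
      l p.length ∉ wordIdeal l p)
    (hcount : Module.finrank K (𝒜 1) ≤ o.count false) :
    (HomogeneousIdeal.irrelevant 𝒜).toIdeal ≤ wordIdeal l o := by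
  by_contra hm
  have hdim : o.count false ≤ homDim 𝒜 (wordIdeal l o) 1 :=
    count_false_le_homDim_wordIdeal 𝒜 hl fun p hp => hnew p hp fun hmp =>
      hm (hmp.trans (wordIdeal_le_of_prefix l ((p.prefix_append [false]).trans hp)))
  exact hm (irrelevant_le_of_finrank_le_homDim_one 𝒜 hstd (hcount.trans hdim))

theorem span_le_irrelevant {s : Set R} {e : ℕ} (he : 0 < e) (hs : s ⊆ 𝒜 e) :
    Ideal.span s ≤ (HomogeneousIdeal.irrelevant 𝒜).toIdeal :=
  Ideal.span_le.2 fun _ hx => HomogeneousIdeal.mem_irrelevant_of_mem 𝒜 he (hs hx)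

end Graded

theorem gr_condition_two_of_condition_one_general
    {K R : Type*} [Field K] [CommRing R] [Algebra K R]
    (𝒜 : ℕ → Submodule K R) [GradedAlgebra 𝒜] (hstd : ∀ n, 𝒜 (n + 1) = 𝒜 1 * 𝒜 n)
    [FiniteDimensional K (𝒜 1)] (d r : ℕ) (hd : 0 < d)
    (hr : Module.finrank K (𝒜 1) + d ≤ r + 1)
    (l : ℕ → R) (hl : ∀ j < r, l j ∈ 𝒜 1)
    (h1 : ∀ o : List Bool, o.length < r → o.count true < d →
      ¬ (HomogeneousIdeal.irrelevant 𝒜).toIdeal ≤ wordIdeal l o →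
      l o.length ∉ wordIdeal l o) :
    Ideal.span (l '' Set.Iio r) = (HomogeneousIdeal.irrelevant 𝒜).toIdeal ∧
      ∀ o : List Bool, o.length = r → o.count true < d →
        (HomogeneousIdeal.irrelevant 𝒜).toIdeal ≤ wordIdeal l o := by
  have condition_two : ∀ o : List Bool, o.length = r → o.count true < d →
      (HomogeneousIdeal.irrelevant 𝒜).toIdeal ≤ wordIdeal l o := by
    rintro o rfl hc
    have hcount : Module.finrank K (𝒜 1) ≤ o.count false := by
      have := o.count_true_add_count_false
      omega
    refine irrelevant_le_wordIdeal_of_finrank_le_count_false 𝒜 hstd hl (fun p hp => ?_) hcount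
    have hlen : p.length < o.length := by simpa using hp.length_le
    exact h1 p hlen ((((p.prefix_append [false]).trans hp).count_le true).trans_lt hc)
  refine ⟨le_antisymm (span_le_irrelevant 𝒜 one_pos (Set.image_subset_iff.2 hl)) ?_, condition_two⟩
  rw [← wordIdeal_replicate_false]
  exact condition_two _ List.length_replicate (by simpa [List.count_replicate] using hd)

/-- If linear forms `l 0, …, l (r-1)` of a standard graded algebra `R`, with
`r ≥ n + d - 1` (`n = dim_K R_1`, `d > 0`), satisfy condition (1) of property (Gr,d),
then they generate the homogeneous maximal ideal and satisfy condition (2) of (Gr,d):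
for every word `o` of length `r` with `|o|_c < d` one has `m ⊆ I_o`. -/
theorem gr_condition_two_of_condition_one
    {K R : Type*} [Field K] [CommRing R] [Algebra K R]
    (𝒜 : ℕ → Submodule K R) [GradedAlgebra 𝒜]
    (h0 : 𝒜 0 = (1 : Submodule K R)) (hstd : ∀ n, 𝒜 (n + 1) = 𝒜 1 * 𝒜 n)
    [FiniteDimensional K (𝒜 1)] (d r : ℕ) (hd : 0 < d)
    (hr : Module.finrank K (𝒜 1) + d ≤ r + 1)
    (l : ℕ → R) (hl : ∀ j < r, l j ∈ 𝒜 1)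
    (h1 : ∀ o : List Bool, o.length < r →
      ¬ (HomogeneousIdeal.irrelevant 𝒜).toIdeal ≤ wordIdeal l o →
      l o.length ∉ wordIdeal l o) :
    Ideal.span (l '' Set.Iio r) = (HomogeneousIdeal.irrelevant 𝒜).toIdeal ∧
      ∀ o : List Bool, o.length = r → o.count true < d →
        (HomogeneousIdeal.irrelevant 𝒜).toIdeal ≤ wordIdeal l o := by
  exact gr_condition_two_of_condition_one_general 𝒜 hstd d r hd hr l hl
    fun o hlen _ => h1 o hlen
end

section
/- Let R = K[X_1,…,X_n]/J be a standard graded algebra over an infinite field K, let V ⊆ 𝔸(R_1) be an irreducible variety such that the r-fold product V^r = V × ⋯ × V is irreducible, and let o = o_1,…,o_i be a word in {c,s} with 0 ≤ i ≤ r. Then there exists a nonempty Zariski open subset U ⊆ V^r such that the Hilbert function of the ideal I_{l,o} (i.e. the function j ↦ dim_K (I_{l,o})_j) is the same for every r-tuple l = (l_1,…,l_r) ∈ U. -/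
/-!
Let `A` be the coordinate ring of the parameter variety, a domain, and read the points of the
variety as specializations `A → K`. For an ideal `J` of `A[X₁, …, Xₙ]`, inverting one nonzero
`f ∈ A` (a product of leading coefficients) makes the monomials that are not leading monomials of
`J` a basis of the quotient by `J`, and the same monomials remain a basis after every
specialization with `f ≠ 0`. Freeness of the quotient by `J + (l)` makes the colon `J : l` commute
with general specializations. Hence at general points all the ideals of a given word come from one
ideal over `A`, and their Hilbert functions are determined by one set of standard monomials.
-/

open MvPolynomial

section ComplAway

variable {A M : Type*} [CommRing A] [AddCommGroup M] [Module A M]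

/-- The `f`-power saturation of a submodule `P`: the elements that some power of `f` moves
into `P`, i.e. the preimage in `M` of the localization `P_f ⊆ M_f`. -/
def powSaturation (f : A) (P : Submodule A M) : Submodule A M where
  carrier := {x | ∃ N : ℕ, f ^ N • x ∈ P}
  zero_mem' := ⟨0, by simp⟩
  add_mem' := by
    rintro x y ⟨N, hx⟩ ⟨N', hy⟩
    refine ⟨N + N', ?_⟩
    rw [smul_add, pow_add, mul_smul, smul_comm _ _ x, mul_smul]
    exact add_mem (P.smul_mem _ hx) (P.smul_mem _ hy)
  smul_mem' := by
    rintro a x ⟨N, hx⟩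
    exact ⟨N, by rw [smul_comm]; exact P.smul_mem a hx⟩

theorem mem_powSaturation {f : A} {P : Submodule A M} {x : M} :
    x ∈ powSaturation f P ↔ ∃ N : ℕ, f ^ N • x ∈ P :=
  Iff.rfl

theorem le_powSaturation (f : A) (P : Submodule A M) : P ≤ powSaturation f P :=
  fun x hx => ⟨0, by simpa using hx⟩

theorem mem_powSaturation_of_smul_mem {f : A} {P : Submodule A M} {x : M}
    (hx : f • x ∈ powSaturation f P) : x ∈ powSaturation f P := by
  obtain ⟨N, hN⟩ := hx
  exact ⟨N + 1, by rwa [pow_succ, mul_smul]⟩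

theorem smul_powSaturation_le (f : A) (I : Ideal A) (P : Submodule A M) :
    I • powSaturation f P ≤ powSaturation f (I • P) := by
  rw [Submodule.smul_le]
  rintro a ha x ⟨N, hx⟩
  exact ⟨N, by rw [smul_comm]; exact Submodule.smul_mem_smul ha hx⟩

/-- Two submodules that become complementary after inverting `f`, phrased without localizing:
every element of `M` lies in their sum up to a power of `f`. -/
structure IsComplAway (f : A) (P Q : Submodule A M) : Prop where
  disjoint : Disjoint P Q
  powSaturation_sup : powSaturation f (P ⊔ Q) = ⊤

namespace IsComplAway

variable {f : A} {P Q : Submodule A M}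

theorem exists_pow_smul_eq_add (h : IsComplAway f P Q) {I : Ideal A} {x : M}
    (hx : x ∈ (I • ⊤ : Submodule A M)) :
    ∃ N : ℕ, ∃ p ∈ I • P, ∃ q ∈ I • Q, p + q = f ^ N • x := by
  have hx' := smul_powSaturation_le f I (P ⊔ Q) (by rwa [h.powSaturation_sup])
  simpa only [mem_powSaturation, Submodule.smul_sup, Submodule.mem_sup] using hx'

/-- A form of `Tor₁(M / P, A / I) = 0` after inverting `f`. -/
theorem inf_smul_top_le (h : IsComplAway f P Q) (I : Ideal A) :
    P ⊓ I • ⊤ ≤ powSaturation f (I • P) := by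
  rintro x ⟨hxP, hxI⟩
  obtain ⟨N, p, hp, q, hq, hpq⟩ := h.exists_pow_smul_eq_add hxI
  have hqP : q ∈ P := by
    rw [← add_sub_cancel_left p q, hpq]
    exact sub_mem (P.smul_mem _ hxP) (Submodule.smul_le_right hp)
  have hq0 : q = 0 := Submodule.disjoint_def.1 h.disjoint q hqP (Submodule.smul_le_right hq)
  exact ⟨N, by rwa [← hpq, hq0, add_zero]⟩

variable {k M' : Type*} [Field k] [AddCommGroup M'] [Module k M']
  {φ : A →+* k} [RingHomSurjective φ] {ψ : M →ₛₗ[φ] M'}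

theorem codisjoint_map (h : IsComplAway f P Q) (hf : φ f ≠ 0) (hψ : Function.Surjective ψ) :
    Codisjoint (P.map ψ) (Q.map ψ) := by
  rw [codisjoint_iff, ← Submodule.map_sup, Submodule.eq_top_iff']
  intro y
  obtain ⟨x, rfl⟩ := hψ y
  obtain ⟨N, hN⟩ : x ∈ powSaturation f (P ⊔ Q) := h.powSaturation_sup ▸ Submodule.mem_top
  have hNx : φ f ^ N • ψ x ∈ (P ⊔ Q).map ψ := by
    simpa only [map_smulₛₗ, map_pow] using Submodule.mem_map_of_mem (f := ψ) hN
  exact (Submodule.smul_mem_iff _ (pow_ne_zero N hf)).1 hNx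

theorem disjoint_map (h : IsComplAway f P Q) (hf : φ f ≠ 0)
    (hker : LinearMap.ker ψ = RingHom.ker φ • ⊤) : Disjoint (P.map ψ) (Q.map ψ) := by
  rw [Submodule.disjoint_def]
  rintro _ ⟨p, hp, rfl⟩ ⟨q, hq, hqp⟩
  have hpq : p - q ∈ (RingHom.ker φ • ⊤ : Submodule A M) := by
    rw [← hker, LinearMap.mem_ker, map_sub, hqp, sub_self]
  obtain ⟨N, p', hp', q', hq', hsum⟩ := h.exists_pow_smul_eq_add hpq
  have hfp : f ^ N • p - p' = 0 := by
    refine Submodule.disjoint_def.1 h.disjoint _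
      (sub_mem (P.smul_mem _ hp) (Submodule.smul_le_right hp')) ?_
    have : f ^ N • p - p' = f ^ N • q + q' := by
      rw [sub_eq_iff_eq_add, add_assoc, add_comm q' p', hsum, smul_sub, add_sub_cancel]
    rw [this]
    exact add_mem (Q.smul_mem _ hq) (Submodule.smul_le_right hq')
  have hψp' : ψ p' = 0 := by
    rw [← LinearMap.mem_ker, hker]
    exact Submodule.smul_mono le_rfl le_top hp'
  have hsmul : φ f ^ N • ψ p = 0 := by
    rw [← map_pow, ← map_smulₛₗ, sub_eq_zero.1 hfp, hψp']
  exact (smul_eq_zero_iff_right (pow_ne_zero N hf)).1 hsmul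

theorem isCompl_map (h : IsComplAway f P Q) (hf : φ f ≠ 0) (hψ : Function.Surjective ψ)
    (hker : LinearMap.ker ψ = RingHom.ker φ • ⊤) : IsCompl (P.map ψ) (Q.map ψ) :=
  ⟨h.disjoint_map hf hker, h.codisjoint_map hf hψ⟩

end IsComplAway

end ComplAway

section LeadingExponents

variable {σ A : Type*} [CommRing A] (m : MonomialOrder σ) (J : Ideal (MvPolynomial σ A))

/-- The exponents of the leading monomials of the nonzero elements of `J`. -/
def leadingExponents : Set (σ →₀ ℕ) :=
  m.degree '' {h | h ∈ J ∧ h ≠ 0}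

/-- Every leading exponent of `J` is attained by an element of `J` with leading coefficient `f`. -/
def IsUniformLeadingCoeff (f : A) : Prop :=
  ∀ d ∈ leadingExponents m J, ∃ G ∈ J, m.degree G = d ∧ m.leadingCoeff G = f

variable {m J}

theorem exists_degree_eq_leadingCoeff_eq [NoZeroDivisors A] {h : MvPolynomial σ A} (hJ : h ∈ J)
    (h0 : h ≠ 0) {e : σ →₀ ℕ} (he : m.degree h ≤ e) {c : A} (hc : c ≠ 0) :
    ∃ G ∈ J, m.degree G = e ∧ m.leadingCoeff G = c * m.leadingCoeff h := by
  classical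
  refine ⟨monomial (e - m.degree h) c * h, J.mul_mem_left _ hJ, ?_, ?_⟩
  · rw [m.degree_mul (by simpa using hc) h0, m.degree_monomial, if_neg hc,
      tsub_add_cancel_of_le he]
  · rw [m.leadingCoeff_mul, m.leadingCoeff_monomial]

variable (m J) in
/-- By Dickson's lemma `J` has finitely many minimal leading exponents; multiply the leading
coefficients of elements attaining them. -/
theorem exists_isUniformLeadingCoeff [IsDomain A] [Finite σ] :
    ∃ f : A, f ≠ 0 ∧ IsUniformLeadingCoeff m J f := by
  classical
  have hfin : {d | Minimal (· ∈ leadingExponents m J) d}.Finite :=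
    WellQuasiOrderedLE.finite_of_isAntichain (setOfPred_minimal_antichain _)
  choose! h hJ hdeg using fun d (hd : d ∈ leadingExponents m J) => hd
  have hf : ∏ d ∈ hfin.toFinset, m.leadingCoeff (h d) ≠ 0 :=
    Finset.prod_ne_zero_iff.2 fun d hd =>
      m.leadingCoeff_ne_zero_iff.2 (hJ d (hfin.mem_toFinset.1 hd).prop).2
  refine ⟨_, hf, fun e he => ?_⟩
  obtain ⟨d, hde, hd⟩ := exists_minimal_le_of_wellFoundedLT (· ∈ leadingExponents m J) e he
  obtain ⟨c, hc⟩ := Finset.dvd_prod_of_mem (fun d => m.leadingCoeff (h d)) (hfin.mem_toFinset.2 hd)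
  rw [hc] at hf ⊢
  rw [mul_comm]
  exact exists_degree_eq_leadingCoeff_eq (hJ d hd.prop).1 (hJ d hd.prop).2
    ((hdeg d hd.prop).trans_le hde) (right_ne_zero_of_mul hf)

theorem disjoint_restrictSupport_compl_leadingExponents :
    Disjoint (J.restrictScalars A) (restrictSupport A (leadingExponents m J)ᶜ) := by
  rw [Submodule.disjoint_def]
  intro p hpJ hp
  by_contra hp0
  exact (mem_restrictSupport_iff A).1 hp (m.degree_mem_support hp0) ⟨p, ⟨hpJ, hp0⟩, rfl⟩

theorem toSyn_lt_of_mem_support_sub_leadingTerm {G : MvPolynomial σ A} {e : σ →₀ ℕ}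
    (he : e ∈ (G - m.leadingTerm G).support) : m.toSyn e < m.toSyn (m.degree G) := by
  classical
  rw [mem_support_iff, coeff_sub, MonomialOrder.leadingTerm, coeff_monomial] at he
  have hne : e ≠ m.degree G := by
    rintro rfl
    simp [MonomialOrder.leadingCoeff] at he
  rw [if_neg hne.symm, sub_zero] at he
  exact (m.le_degree (mem_support_iff.2 he)).lt_of_ne fun h => hne (m.toSyn.injective h)

/-- Pseudo-division by `J`: a monomial that is a leading monomial of `J` equals, up to the factor
`f` and modulo `J`, a combination of smaller monomials. -/
theorem IsUniformLeadingCoeff.monomial_mem_powSaturation {f : A} (hf : IsUniformLeadingCoeff m J f)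
    (d : σ →₀ ℕ) : monomial d 1 ∈
      powSaturation f (J.restrictScalars A ⊔ restrictSupport A (leadingExponents m J)ᶜ) := by
  induction hs : m.toSyn d using WellFoundedLT.induction generalizing d with
  | ind s ih =>
  subst hs
  by_cases hd : d ∈ leadingExponents m J
  · obtain ⟨G, hGJ, rfl, hGf⟩ := hf d hd
    have htail : G - m.leadingTerm G ∈
        powSaturation f (J.restrictScalars A ⊔ restrictSupport A (leadingExponents m J)ᶜ) := by
      rw [(G - m.leadingTerm G).as_sum]
      refine sum_mem fun e he => ?_
      have hlt : m.toSyn e < m.toSyn (m.degree G) := toSyn_lt_of_mem_support_sub_leadingTerm he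
      rw [← mul_one (coeff e _), ← smul_eq_mul, ← smul_monomial]
      exact Submodule.smul_mem _ _ (ih _ hlt e rfl)
    apply mem_powSaturation_of_smul_mem
    have hlead : f • monomial (m.degree G) 1 = G - (G - m.leadingTerm G) := by
      rw [sub_sub_cancel, MonomialOrder.leadingTerm, hGf, smul_monomial, smul_eq_mul, mul_one]
    rw [hlead]
    exact sub_mem (le_powSaturation _ _ (Submodule.mem_sup_left hGJ)) htail
  · exact le_powSaturation _ _ (Submodule.mem_sup_right
      ((monomial_mem_restrictSupport A).2 (Or.inl hd)))

theorem IsUniformLeadingCoeff.isComplAway {f : A} (hf : IsUniformLeadingCoeff m J f) :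
    IsComplAway f (J.restrictScalars A) (restrictSupport A (leadingExponents m J)ᶜ) where
  disjoint := disjoint_restrictSupport_compl_leadingExponents
  powSaturation_sup := by
    rw [← top_le_iff, ← restrictSupport_univ, restrictSupport_eq_span, Submodule.span_le]
    rintro _ ⟨d, -, rfl⟩
    exact hf.monomial_mem_powSaturation d

theorem exists_isComplAway_restrictSupport [IsDomain A] [Finite σ]
    (J : Ideal (MvPolynomial σ A)) :
    ∃ f : A, f ≠ 0 ∧ ∃ B : Set (σ →₀ ℕ),
      IsComplAway f (J.restrictScalars A) (restrictSupport A B) := by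
  classical
  let _ : LinearOrder σ := linearOrderOfSTO WellOrderingRel
  obtain ⟨f, hf0, hf⟩ := exists_isUniformLeadingCoeff MonomialOrder.lex J
  exact ⟨f, hf0, _, hf.isComplAway⟩

end LeadingExponents

section Colon

variable {A S : Type*} [CommRing A] [CommRing S] [Algebra A S]

/-- If `u * l` lies in `J` modulo `I`, then the error is an element of `J + (l)` that vanishes
modulo `I`; flatness of the quotient by `J + (l)` absorbs it into `J` and `u`. -/
theorem IsComplAway.exists_pow_smul_sub_mem_colon {f : A} {J : Ideal S} {l : S}
    {Q : Submodule A S} (h : IsComplAway f ((J ⊔ Ideal.span {l}).restrictScalars A) Q)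
    {I : Ideal A} {u q : S} (hq : q ∈ J) (hu : u * l - q ∈ (I • ⊤ : Submodule A S)) :
    ∃ N : ℕ, ∃ s ∈ (I • ⊤ : Submodule A S), f ^ N • u - s ∈ J.colon {l} := by
  have herr : u * l - q ∈ J ⊔ Ideal.span {l} :=
    sub_mem (Ideal.mul_mem_left _ _ (Ideal.mem_sup_right (Ideal.mem_span_singleton_self l)))
      (Ideal.mem_sup_left hq)
  obtain ⟨N, hN⟩ := h.inf_smul_top_le I ⟨herr, hu⟩
  rw [← Ideal.smul_restrictScalars, Submodule.restrictScalars_mem, smul_eq_mul,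
    Ideal.mul_sup] at hN
  obtain ⟨w, hw, z, hz, hwz⟩ := Submodule.mem_sup.1 hN
  obtain ⟨s, hs, rfl⟩ := Ideal.mem_mul_span_singleton.1 hz
  have hmul : (f ^ N • u - s) * l = w + f ^ N • q := by
    rw [sub_mul, smul_mul_assoc, sub_eq_iff_eq_add, add_right_comm, hwz, smul_sub,
      sub_add_cancel]
  refine ⟨N, s, by rwa [Ideal.smul_top_eq_map], ?_⟩
  rw [Submodule.mem_colon_singleton, smul_eq_mul, hmul]
  exact add_mem (Ideal.mul_le_right hw) (Submodule.smul_of_tower_mem J _ hq)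

end Colon

section Specialization

variable {σ A k : Type*} [CommRing A] [Field k] (φ : A →+* k)

/-- Specialization of coefficients `MvPolynomial.map φ`, as a semilinear map. -/
noncomputable def mapSemilinear : MvPolynomial σ A →ₛₗ[φ] MvPolynomial σ k where
  toFun := map φ
  map_add' := map_add _
  map_smul' a p := by rw [smul_eq_C_mul, map_mul, map_C, smul_eq_C_mul]

@[simp]
theorem mapSemilinear_apply (p : MvPolynomial σ A) : mapSemilinear φ p = map φ p :=
  rfl

theorem ker_mapSemilinear :
    LinearMap.ker (mapSemilinear (σ := σ) φ) = RingHom.ker φ • (⊤ : Submodule A _) := by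
  ext p
  rw [Ideal.smul_top_eq_map, Submodule.restrictScalars_mem, algebraMap_eq, ← ker_map,
    LinearMap.mem_ker, RingHom.mem_ker, mapSemilinear_apply]

variable [RingHomSurjective φ]

theorem map_mapSemilinear_restrictSupport (B : Set (σ →₀ ℕ)) :
    (restrictSupport A B).map (mapSemilinear φ) = restrictSupport k B := by
  rw [restrictSupport_eq_span, restrictSupport_eq_span, Submodule.map_span, Set.image_image]
  simp only [mapSemilinear_apply, map_monomial, map_one]

theorem map_mapSemilinear_restrictScalars (J : Ideal (MvPolynomial σ A)) :
    (J.restrictScalars A).map (mapSemilinear φ) = (J.map (map φ)).restrictScalars k := by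
  ext p
  exact (Ideal.mem_map_iff_of_surjective _ (map_surjective φ RingHomSurjective.is_surjective)).symm

variable {φ} {f : A} {J : Ideal (MvPolynomial σ A)}

theorem IsComplAway.isCompl_map_restrictSupport {B : Set (σ →₀ ℕ)}
    (h : IsComplAway f (J.restrictScalars A) (restrictSupport A B)) (hf : φ f ≠ 0) :
    IsCompl ((J.map (map φ)).restrictScalars k) (restrictSupport k B) := by
  rw [← map_mapSemilinear_restrictScalars, ← map_mapSemilinear_restrictSupport φ]
  exact h.isCompl_map hf (map_surjective φ RingHomSurjective.is_surjective) (ker_mapSemilinear φ)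

theorem IsComplAway.map_colon_singleton {l : MvPolynomial σ A}
    {Q : Submodule A (MvPolynomial σ A)}
    (h : IsComplAway f ((J ⊔ Ideal.span {l}).restrictScalars A) Q) (hf : φ f ≠ 0) :
    (J.colon {l}).map (map φ) = (J.map (map φ)).colon {map φ l} := by
  apply le_antisymm
  · rw [Ideal.map_le_iff_le_comap]
    intro u hu
    rw [Ideal.mem_comap, Submodule.mem_colon_singleton, smul_eq_mul, ← map_mul]
    exact Ideal.mem_map_of_mem _ (Submodule.mem_colon_singleton.1 hu)
  have hφ : Function.Surjective (map (σ := σ) φ) :=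
    map_surjective φ RingHomSurjective.is_surjective
  intro u hu
  obtain ⟨u, rfl⟩ := hφ u
  rw [Submodule.mem_colon_singleton, smul_eq_mul, ← map_mul,
    Ideal.mem_map_iff_of_surjective _ hφ] at hu
  obtain ⟨q, hq, hqu⟩ := hu
  have hker : u * l - q ∈ (RingHom.ker φ • ⊤ : Submodule A (MvPolynomial σ A)) := by
    rw [← ker_mapSemilinear, LinearMap.mem_ker, mapSemilinear_apply, map_sub, hqu, sub_self]
  obtain ⟨N, s, hs, hcolon⟩ := h.exists_pow_smul_sub_mem_colon hq hker
  rw [← ker_mapSemilinear, LinearMap.mem_ker] at hs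
  have hmem : φ f ^ N • map φ u ∈ ((J.colon {l}).map (map φ)).restrictScalars k := by
    rw [← map_mapSemilinear_restrictScalars]
    refine ⟨_, hcolon, ?_⟩
    rw [map_sub, hs, sub_zero, map_smulₛₗ, map_pow, mapSemilinear_apply]
  exact (Submodule.smul_mem_iff _ (pow_ne_zero N hf)).1 hmem

end Specialization

section GenericallyInduced

theorem comap_sup_span_singleton {S R F : Type*} [CommRing S] [CommRing R] [FunLike F S R]
    [RingHomClass F S R] {g : F} (hg : Function.Surjective g) (I : Ideal R) (p : S) :
    (I ⊔ Ideal.span {g p}).comap g = I.comap g ⊔ Ideal.span {p} := by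
  have hmap : I ⊔ Ideal.span {g p} = (I.comap g ⊔ Ideal.span {p}).map g := by
    rw [Ideal.map_sup, Ideal.map_comap_of_surjective g hg, Ideal.map_span, Set.image_singleton]
  rw [hmap, Ideal.comap_map_of_surjective g hg]
  exact sup_eq_left.2 ((Ideal.comap_mono bot_le).trans le_sup_left)

variable {σ A K R : Type*} [CommRing A] [Field K] [Algebra K A] [CommRing R] [Algebra K R]

instance ringHomSurjective_algHom (φ : A →ₐ[K] K) : RingHomSurjective (φ : A →+* K) :=
  ⟨fun c => ⟨algebraMap K A c, φ.commutes c⟩⟩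

/-- A family of ideals `I φ` of `R = g(K[σ])`, indexed by the `K`-points `φ` of `Spec A`, that over
some nonempty basic open set of `Spec A` is obtained by specializing one ideal of `A[σ]`. -/
def IsGenericallyInduced (g : MvPolynomial σ K →ₐ[K] R) (I : (A →ₐ[K] K) → Ideal R) : Prop :=
  ∃ (J : Ideal (MvPolynomial σ A)) (f : A), f ≠ 0 ∧
    ∀ φ : A →ₐ[K] K, φ f ≠ 0 → J.map (map (φ : A →+* K)) = (I φ).comap g

namespace IsGenericallyInduced

variable {g : MvPolynomial σ K →ₐ[K] R} {I : (A →ₐ[K] K) → Ideal R}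

variable (A g) in
theorem const [Nontrivial A] (I₀ : Ideal R) :
    IsGenericallyInduced g fun _ : A →ₐ[K] K => I₀ := by
  refine ⟨(I₀.comap g).map (map (algebraMap K A)), 1, one_ne_zero, fun φ _ => ?_⟩
  have hid : (map (φ : A →+* K)).comp (map (algebraMap K A)) =
      RingHom.id (MvPolynomial σ K) := by
    ext <;> simp
  rw [Ideal.map_map, hid, Ideal.map_id]

theorem sup_span (hI : IsGenericallyInduced g I) (hg : Function.Surjective g)
    (L : MvPolynomial σ A) :
    IsGenericallyInduced g fun φ => I φ ⊔ Ideal.span {g (map (φ : A →+* K) L)} := by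
  obtain ⟨J, f, hf, hJ⟩ := hI
  exact ⟨J ⊔ Ideal.span {L}, f, hf, fun φ hφ => by
    rw [Ideal.map_sup, hJ φ hφ, Ideal.map_span, Set.image_singleton, comap_sup_span_singleton hg]⟩

variable [IsDomain A] [Finite σ]

theorem colon_span (hI : IsGenericallyInduced g I) (L : MvPolynomial σ A) :
    IsGenericallyInduced g
      fun φ => (I φ).colon (Ideal.span {g (map (φ : A →+* K) L)} : Ideal R) := by
  obtain ⟨J, f, hf, hJ⟩ := hI
  obtain ⟨f', hf', B, hB⟩ := exists_isComplAway_restrictSupport (J ⊔ Ideal.span {L})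
  refine ⟨J.colon {L}, f * f', mul_ne_zero hf hf', fun φ hφ => ?_⟩
  rw [map_mul] at hφ
  rw [hB.map_colon_singleton (φ := (φ : A →+* K)) (right_ne_zero_of_mul hφ),
    hJ φ (left_ne_zero_of_mul hφ)]
  ext u
  rw [Submodule.mem_colon_singleton, smul_eq_mul, Ideal.mem_comap, Ideal.mem_comap,
    Ideal.mem_colon_span_singleton, map_mul]

theorem wordIdealAux (hg : Function.Surjective g) (L : ℕ → MvPolynomial σ A) (o : List Bool)
    (j : ℕ) (hI : IsGenericallyInduced g I) :
    IsGenericallyInduced g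
      fun φ => wordIdealAux (fun t => g (map (φ : A →+* K) (L t))) j (I φ) o := by
  induction o generalizing j I with
  | nil => exact hI
  | cons a o ih =>
    cases a with
    | false => exact ih (j + 1) (hI.sup_span hg (L j))
    | true => exact ih (j + 1) (hI.colon_span (L j))

theorem wordIdeal (hg : Function.Surjective g) (L : ℕ → MvPolynomial σ A) (o : List Bool) :
    IsGenericallyInduced g
      fun φ : A →ₐ[K] K => wordIdeal (fun t => g (map (φ : A →+* K) (L t))) o :=
  (const A g ⊥).wordIdealAux hg L o 0

theorem exists_isCompl_restrictSupport (hI : IsGenericallyInduced g I) :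
    ∃ f : A, f ≠ 0 ∧ ∃ B : Set (σ →₀ ℕ), ∀ φ : A →ₐ[K] K, φ f ≠ 0 →
      IsCompl (((I φ).comap g).restrictScalars K) (restrictSupport K B) := by
  obtain ⟨J, f, hf, hJ⟩ := hI
  obtain ⟨f', hf', B, hB⟩ := exists_isComplAway_restrictSupport J
  refine ⟨f * f', mul_ne_zero hf hf', B, fun φ hφ => ?_⟩
  rw [map_mul] at hφ
  rw [← hJ φ (left_ne_zero_of_mul hφ)]
  exact hB.isCompl_map_restrictSupport (right_ne_zero_of_mul hφ)

end IsGenericallyInduced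

end GenericallyInduced

section Graded

variable {K R σ : Type*} [Field K] [CommRing R] [Algebra K R] (𝒜 : ℕ → Submodule K R)

section Homogeneous

variable [GradedAlgebra 𝒜]

theorem isHomogeneous_colon_span_singleton {I : Ideal R} (hI : I.IsHomogeneous 𝒜) {d : ℕ} {l : R}
    (hl : l ∈ 𝒜 d) : (I.colon (Ideal.span {l} : Ideal R)).IsHomogeneous 𝒜 := by
  intro i u hu
  rw [Ideal.mem_colon_span_singleton] at hu ⊢
  rw [← DirectSum.coe_decompose_mul_add_of_right_mem 𝒜 hl]
  exact hI (i + d) hu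

theorem isHomogeneous_wordIdealAux {l : ℕ → R} (hl : ∀ t, l t ∈ 𝒜 1) {I : Ideal R}
    (hI : I.IsHomogeneous 𝒜) (j : ℕ) (o : List Bool) :
    (wordIdealAux l j I o).IsHomogeneous 𝒜 := by
  induction o generalizing j I with
  | nil => exact hI
  | cons a o ih =>
    cases a with
    | false =>
      refine ih (hI.sup (Ideal.homogeneous_span 𝒜 _ ?_)) (j + 1)
      rintro _ rfl
      exact ⟨1, hl j⟩
    | true => exact ih (isHomogeneous_colon_span_singleton 𝒜 hI (hl j)) (j + 1)

theorem isHomogeneous_wordIdeal {l : ℕ → R} (hl : ∀ t, l t ∈ 𝒜 1) (o : List Bool) :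
    (wordIdeal l o).IsHomogeneous 𝒜 :=
  isHomogeneous_wordIdealAux 𝒜 hl (Ideal.IsHomogeneous.bot 𝒜) 0 o

end Homogeneous

theorem homDim_add_quotDim (I : Ideal R) (d : ℕ) [FiniteDimensional K (𝒜 d)] :
    homDim 𝒜 I d + quotDim 𝒜 I d = Module.finrank K (𝒜 d) := by
  rw [add_comm]
  exact Submodule.finrank_quotient_add_finrank (homComp 𝒜 I d)

variable {𝒜} [GradedAlgebra 𝒜] {g : MvPolynomial σ K →ₐ[K] R}

theorem map_monomial_mem (hgX : ∀ i, g (X i) ∈ 𝒜 1) (e : σ →₀ ℕ) (c : K) :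
    g (monomial e c) ∈ 𝒜 e.degree := by
  rw [monomial_eq, map_mul, ← algebraMap_eq, AlgHom.commutes, ← Algebra.smul_def, Finsupp.prod,
    map_prod, Finsupp.degree_apply]
  refine Submodule.smul_mem _ _ (SetLike.prod_mem_graded 𝒜 _ _ fun i _ => ?_)
  simpa using SetLike.pow_mem_graded (A := 𝒜) (e i) (hgX i)

theorem decompose_map (hgX : ∀ i, g (X i) ∈ 𝒜 1) (p : MvPolynomial σ K) (d : ℕ) :
    (DirectSum.decompose 𝒜 (g p) d : R) = g (homogeneousComponent d p) := by
  induction p using MvPolynomial.induction_on' with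
  | monomial e c =>
    have hmem := map_monomial_mem hgX e c
    rw [homogeneousComponent_of_mem (isHomogeneous_monomial c rfl)]
    split_ifs with hd
    · rw [hd, DirectSum.decompose_of_mem_same 𝒜 hmem]
    · rw [DirectSum.decompose_of_mem_ne 𝒜 hmem (Ne.symm hd), map_zero]
  | add p q hp hq =>
    rw [map_add, DirectSum.decompose_add, DirectSum.add_apply, Submodule.coe_add, hp, hq,
      map_add, map_add]

theorem finiteDimensional_component_of_surjective [Finite σ] (hgX : ∀ i, g (X i) ∈ 𝒜 1)
    (hg : Function.Surjective g) (d : ℕ) : FiniteDimensional K (𝒜 d) := by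
  rw [FiniteDimensional, Module.Finite.iff_fg]
  have hle : 𝒜 d ≤ (homogeneousSubmodule σ K d).map g.toLinearMap := by
    intro a ha
    obtain ⟨p, rfl⟩ := hg a
    refine ⟨_, homogeneousComponent_isHomogeneous d p, ?_⟩
    rw [AlgHom.toLinearMap_apply, ← decompose_map hgX, DirectSum.decompose_of_mem_same 𝒜 ha]
  exact Submodule.FG.of_le ((homogeneousSubmodule_fg σ K d).map _) hle

theorem exists_mem_restrictSupport_sub_mem (hgX : ∀ i, g (X i) ∈ 𝒜 1)
    (hg : Function.Surjective g) {I : Ideal R} (hI : I.IsHomogeneous 𝒜) {B : Set (σ →₀ ℕ)}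
    (hB : Codisjoint ((I.comap g).restrictScalars K) (restrictSupport K B)) {d : ℕ} {a : R}
    (ha : a ∈ 𝒜 d) : ∃ s ∈ restrictSupport K {e ∈ B | e.degree = d}, g s - a ∈ I := by
  obtain ⟨p, rfl⟩ := hg a
  obtain ⟨q, hq, s, hs, rfl⟩ := Submodule.mem_sup.1 (hB.eq_top ▸ Submodule.mem_top (x := p))
  refine ⟨homogeneousComponent d s, (mem_restrictSupport_iff K).2 fun e he => ?_, ?_⟩
  · rw [Finset.mem_coe, mem_support_iff, coeff_homogeneousComponent, ite_ne_right_iff] at he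
    exact ⟨hs (mem_support_iff.2 he.2), he.1⟩
  · rw [← DirectSum.decompose_of_mem_same 𝒜 ha, decompose_map hgX, map_add, map_add,
      sub_add_cancel_right, ← decompose_map hgX]
    exact I.neg_mem (hI d hq)

theorem quotDim_eq_ncard (hgX : ∀ i, g (X i) ∈ 𝒜 1) (hg : Function.Surjective g)
    {I : Ideal R} (hI : I.IsHomogeneous 𝒜)
    {B : Set (σ →₀ ℕ)} (hB : IsCompl ((I.comap g).restrictScalars K) (restrictSupport K B))
    (d : ℕ) : quotDim 𝒜 I d = {e ∈ B | e.degree = d}.ncard := by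
  have hmem : ∀ s ∈ restrictSupport K {e ∈ B | e.degree = d}, g s ∈ 𝒜 d := by
    intro s hs
    rw [s.as_sum, map_sum]
    refine sum_mem fun e he => ?_
    rw [← (hs he).2]
    exact map_monomial_mem hgX e _
  let F := (homComp 𝒜 I d).mkQ ∘ₗ g.toLinearMap.restrict hmem
  have hF : Function.Bijective F := by
    constructor
    · rw [← LinearMap.ker_eq_bot, LinearMap.ker_eq_bot']
      rintro ⟨s, hs⟩ hFs
      have hgs : g s ∈ I := (Submodule.Quotient.mk_eq_zero (homComp 𝒜 I d)).1 hFs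
      exact Subtype.ext (Submodule.disjoint_def.1 hB.disjoint s hgs
        (restrictSupport_mono K (Set.sep_subset _ _) hs))
    · intro a
      obtain ⟨a, rfl⟩ := Submodule.mkQ_surjective _ a
      obtain ⟨s, hs, hsa⟩ :=
        exists_mem_restrictSupport_sub_mem hgX hg hI hB.codisjoint a.2
      exact ⟨⟨s, hs⟩, (Submodule.Quotient.eq (homComp 𝒜 I d)).2 hsa⟩
  rw [quotDim, ← (LinearEquiv.ofBijective F hF).finrank_eq,
    Module.finrank_eq_nat_card_basis (basisRestrictSupport K _), Nat.card_coe_set_eq]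

end Graded

section CoordRing

variable {K E : Type*} [Field K] [AddCommGroup E] [Module K E] {Y : Set E}

variable (K Y) in
/-- The coordinate ring of `Y`: the restrictions to `Y` of the polynomial functions on `E`. -/
def coordRing : Subalgebra K (Y → K) :=
  (polyFuns K E).map (AlgHom.pi fun x : Y => Pi.evalAlgHom K (fun _ : E => K) x)

variable (K) in
/-- The `K`-point of the coordinate ring given by evaluation at `x`. -/
def evalAt (x : Y) : coordRing K Y →ₐ[K] K :=
  (Pi.evalAlgHom K (fun _ : Y => K) x).comp (coordRing K Y).val

theorem isZClosed_zeroLocus {F : E → K} (hF : F ∈ polyFuns K E) : IsZClosed K {v | F v = 0} :=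
  ⟨{F}, by simpa using hF, by simp⟩

theorem isDomain_coordRing (hY : IsIrredVariety K Y) : IsDomain (coordRing K Y) := by
  have : Nonempty Y := hY.2.1.to_subtype
  have : NoZeroDivisors (coordRing K Y) := by
    refine ⟨?_⟩
    rintro ⟨_, F, hF, rfl⟩ ⟨_, G, hG, rfl⟩ hFG
    have hcover : Y ⊆ {v | F v = 0} ∪ {v | G v = 0} := fun x hx =>
      mul_eq_zero.1 (congrFun (congrArg Subtype.val hFG) ⟨x, hx⟩)
    refine (hY.2.2 _ _ (isZClosed_zeroLocus hF) (isZClosed_zeroLocus hG) hcover).imp ?_ ?_ <;>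
      exact fun h => Subtype.ext (funext fun x => h x.2)
  exact NoZeroDivisors.to_isDomain _

theorem exists_isZOpen_evalAt_ne_zero {f : coordRing K Y} (hf : f ≠ 0) :
    ∃ W : Set E, IsZOpen K W ∧ (Y ∩ W).Nonempty ∧ ∀ x : Y, (x : E) ∈ W → evalAt K x f ≠ 0 := by
  obtain ⟨_, F, hF, rfl⟩ := f
  obtain ⟨x, hx⟩ : ∃ x : Y, F x ≠ 0 := by
    by_contra! h
    exact hf (Subtype.ext (funext h))
  refine ⟨{v | F v ≠ 0}, ?_, ⟨x, x.2, hx⟩, fun _ h => h⟩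
  simpa [IsZOpen, Set.compl_ofPred] using isZClosed_zeroLocus hF

theorem exists_map_evalAt_eq {σ R : Type*} [CommRing R] [Algebra K R]
    {g : MvPolynomial σ K →ₐ[K] R} (hg : Function.Surjective g) {N : Submodule K R}
    [FiniteDimensional K N] (l : E →ₗ[K] N) :
    ∃ L : MvPolynomial σ (coordRing K Y),
      ∀ x : Y, g (map (evalAt K x : coordRing K Y →+* K) L) = l x := by
  let b := Module.finBasis K N
  choose p hp using fun i => hg (b i : R)
  let c i : coordRing K Y := ⟨_, _, Algebra.subset_adjoin ⟨b.coord i ∘ₗ l, rfl⟩, rfl⟩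
  refine ⟨∑ i, C (c i) * map (algebraMap K _) (p i), fun x => ?_⟩
  have hcomp : (evalAt K x : coordRing K Y →+* K).comp (algebraMap K _) = RingHom.id K := rfl
  have hterm i : g (map (evalAt K x : coordRing K Y →+* K) (C (c i) * map (algebraMap K _) (p i))) =
      b.repr (l x) i • (b i : R) := by
    rw [map_mul, map_C, map_map, hcomp, map_id, ← smul_eq_C_mul, map_smul, hp]
    rfl
  rw [map_sum, map_sum, Finset.sum_congr rfl fun i _ => hterm i]
  exact_mod_cast congrArg Subtype.val (b.sum_repr (l x))

end CoordRing

theorem prop_constant_hilbert_function_general {K R σ E : Type*} [Field K] [CommRing R]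
    [Algebra K R] [Finite σ] [AddCommGroup E] [Module K E] (𝒜 : ℕ → Submodule K R)
    [GradedAlgebra 𝒜] {g : MvPolynomial σ K →ₐ[K] R} (hg : Function.Surjective g)
    (hgX : ∀ i, g (X i) ∈ 𝒜 1) {Y : Set E} (hY : IsIrredVariety K Y) (l : ℕ → E →ₗ[K] 𝒜 1)
    (o : List Bool) :
    ∃ W : Set E, IsZOpen K W ∧ (Y ∩ W).Nonempty ∧ ∃ H : ℕ → ℕ, ∀ x ∈ Y ∩ W, ∀ j,
      homDim 𝒜 (wordIdeal (fun t => (l t x : R)) o) j = H j := by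
  have (j : ℕ) : FiniteDimensional K (𝒜 j) := finiteDimensional_component_of_surjective hgX hg j
  have : IsDomain (coordRing K Y) := isDomain_coordRing hY
  choose L hL using fun t => exists_map_evalAt_eq (Y := Y) hg (l t)
  obtain ⟨f, hf, B, hB⟩ := (IsGenericallyInduced.wordIdeal hg L o).exists_isCompl_restrictSupport
  obtain ⟨W, hW, hYW, hWf⟩ := exists_isZOpen_evalAt_ne_zero hf
  refine ⟨W, hW, hYW, fun j => Module.finrank K (𝒜 j) - {e ∈ B | e.degree = j}.ncard,
    fun x hx j => ?_⟩
  have hcompl := hB (evalAt K ⟨x, hx.1⟩) (hWf ⟨x, hx.1⟩ hx.2)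
  simp only [hL] at hcompl
  have hhom := isHomogeneous_wordIdeal 𝒜 (fun t => (l t x).2) o
  exact Nat.eq_sub_of_add_eq
    (quotDim_eq_ncard hgX hg hhom hcompl j ▸ homDim_add_quotDim 𝒜 (wordIdeal _ o) j)

/-- **Proposition (constancy of the Hilbert function).** Let `R = K[X_1,…,X_n]/J` be a
standard graded algebra over an infinite field `K` (presented by a graded surjection `g`
from a polynomial ring), let `V ⊆ 𝔸(R_1)` be an irreducible variety such that
`V^r` is irreducible, and let `o` be a word in `{c,s}` of length `≤ r`.  Then there is a
nonempty Zariski open subset `U` of `V^r` on which the Hilbert function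
`j ↦ dim_K (I_{l,o})_j` is constant. -/
theorem prop_constant_hilbert_function
    {K R : Type*} [Field K] [Infinite K] [CommRing R] [Algebra K R]
    (𝒜 : ℕ → Submodule K R) [GradedAlgebra 𝒜]
    (h0 : 𝒜 0 = (1 : Submodule K R)) (hstd : ∀ n, 𝒜 (n + 1) = 𝒜 1 * 𝒜 n)
    [FiniteDimensional K (𝒜 1)]
    (n : ℕ) (g : MvPolynomial (Fin n) K →ₐ[K] R) (hg : Function.Surjective g)
    (hgX : ∀ i, g (MvPolynomial.X i) ∈ 𝒜 1)
    (V : Set (𝒜 1)) (hV : IsIrredVariety K V)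
    (r : ℕ) (hVr : IsIrredVariety K {x : Fin r → 𝒜 1 | ∀ t, x t ∈ V})
    (o : List Bool) (ho : o.length ≤ r) :
    ∃ U : Set (Fin r → 𝒜 1),
      (∃ W : Set (Fin r → 𝒜 1), IsZOpen K W ∧ U = {x | ∀ t, x t ∈ V} ∩ W) ∧
      U.Nonempty ∧
      ∃ H : ℕ → ℕ, ∀ x ∈ U, ∀ j : ℕ,
        homDim 𝒜 (wordIdeal (fun t => if h : t < r then (x ⟨t, h⟩ : R) else 0) o) j = H j := by
  obtain ⟨W, hW, hne, H, hH⟩ := prop_constant_hilbert_function_general 𝒜 hg hgX hVr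
    (fun t => if h : t < r then LinearMap.proj ⟨t, h⟩ else 0) o
  have hproj (x : Fin r → 𝒜 1) (t : ℕ) : (if h : t < r then (x ⟨t, h⟩ : R) else 0) =
      (if h : t < r then LinearMap.proj ⟨t, h⟩ else 0 : (Fin r → 𝒜 1) →ₗ[K] 𝒜 1) x := by
    split_ifs <;> rfl
  exact ⟨_, ⟨W, hW, rfl⟩, hne, H, by simpa only [hproj] using hH⟩
end

section
/- Let K be a field and let V ⊆ 𝔸^n_K be an irreducible affine variety (the zero set of a prime ideal P ⊆ K[Y_1,…,Y_n]). If K is algebraically closed, or if the defining ideal P of V is homogeneous, then for every r ≥ 1 the r-fold product V^r = V × ⋯ × V ⊆ 𝔸^{rn}_K is irreducible. -/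
/-!
The Zariski topology on `E × F` is finer than the product topology, but its restriction to each
slice `{x} × F` and `E × {y}` is the Zariski topology of the factor, and this suffices. If
`W × T ⊆ Z₁ ∪ Z₂`, then irreducibility of `T` puts every slice `{x} × T` with `x ∈ W` into `Z₁` or
into `Z₂`. For each `j` the points `x` with `{x} × T ⊆ Z_j` form a closed set, being an
intersection over `y ∈ T` of slices of `Z_j`; irreducibility of `W` puts all of `W` into one of
the two.
-/

section ZariskiTopology

variable {K E F : Type*} [Field K] [AddCommGroup E] [Module K E] [AddCommGroup F] [Module K F]

theorem comp_affineMap_mem_polyFuns {f : F → K} (hf : f ∈ polyFuns K F) (A : E →ᵃ[K] F) :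
    f ∘ A ∈ polyFuns K E := by
  induction hf using Algebra.adjoin_induction with
  | mem _ hφ =>
    obtain ⟨φ, rfl⟩ := hφ
    have linear_add_const : φ ∘ A = ⇑(φ ∘ₗ A.linear) + algebraMap K (E → K) (φ (A 0)) := by
      rw [A.decomp]
      ext v
      simp
    rw [linear_add_const]
    exact add_mem (Algebra.subset_adjoin ⟨_, rfl⟩) (Subalgebra.algebraMap_mem _ _)
  | algebraMap a => exact Subalgebra.algebraMap_mem _ a
  | add f g _ _ hf hg => exact add_mem hf hg
  | mul f g _ _ hf hg => exact mul_mem hf hg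

namespace IsZClosed

theorem preimage_affineMap {Z : Set F} (hZ : IsZClosed K Z) (A : E →ᵃ[K] F) :
    IsZClosed K (A ⁻¹' Z) := by
  obtain ⟨S, hS, rfl⟩ := hZ
  refine ⟨(· ∘ A) '' S, Set.forall_mem_image.2 fun f hf ↦
    comp_affineMap_mem_polyFuns (hS f hf) A, ?_⟩
  ext v
  simp

theorem iInter {ι : Sort*} {Z : ι → Set E} (hZ : ∀ i, IsZClosed K (Z i)) :
    IsZClosed K (⋂ i, Z i) := by
  choose S hS hZS using hZ
  refine ⟨⋃ i, S i, fun f hf ↦ ?_, ?_⟩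
  · obtain ⟨i, hi⟩ := Set.mem_iUnion.1 hf
    exact hS i f hi
  · ext v
    simp only [hZS, Set.mem_iInter, Set.mem_iUnion, Set.mem_ofPred_eq, forall_exists_index]
    exact forall_comm

theorem inter {Z₁ Z₂ : Set E} (h₁ : IsZClosed K Z₁) (h₂ : IsZClosed K Z₂) :
    IsZClosed K (Z₁ ∩ Z₂) := by
  rw [Set.inter_eq_iInter]
  exact iInter (Bool.forall_bool.2 ⟨h₂, h₁⟩)

theorem prod {W : Set E} {T : Set F} (hW : IsZClosed K W) (hT : IsZClosed K T) :
    IsZClosed K (W ×ˢ T) :=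
  (hW.preimage_affineMap (LinearMap.fst K E F).toAffineMap).inter
    (hT.preimage_affineMap (LinearMap.snd K E F).toAffineMap)

theorem preimage_prodMk_left {Z : Set (E × F)} (hZ : IsZClosed K Z) (x : E) :
    IsZClosed K (Prod.mk x ⁻¹' Z) :=
  hZ.preimage_affineMap ((AffineMap.const K F x).prod (AffineMap.id K F))

theorem preimage_prodMk_right {Z : Set (E × F)} (hZ : IsZClosed K Z) (y : F) :
    IsZClosed K ((·, y) ⁻¹' Z) :=
  hZ.preimage_affineMap ((AffineMap.id K E).prod (AffineMap.const K E y))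

theorem setOf_forall_prodMk_mem {Z : Set (E × F)} (hZ : IsZClosed K Z) (T : Set F) :
    IsZClosed K {x | ∀ y ∈ T, (x, y) ∈ Z} := by
  simp only [Set.ofPred_forall]
  exact iInter fun y ↦ iInter fun _ ↦ hZ.preimage_prodMk_right y

end IsZClosed

theorem isIrredVariety_univ_of_subsingleton [Subsingleton E] :
    IsIrredVariety K (Set.univ : Set E) := by
  refine ⟨⟨∅, by simp, by simp⟩, Set.univ_nonempty, fun Z₁ Z₂ _ _ hcover ↦ ?_⟩
  exact (hcover (Set.mem_univ 0)).imp
    (fun h x _ ↦ Subsingleton.elim 0 x ▸ h) (fun h x _ ↦ Subsingleton.elim 0 x ▸ h)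

namespace IsIrredVariety

theorem preimage_affineEquiv {W : Set F} (hW : IsIrredVariety K W) (e : E ≃ᵃ[K] F) :
    IsIrredVariety K (e ⁻¹' W) := by
  obtain ⟨hclosed, hne, hirr⟩ := hW
  refine ⟨hclosed.preimage_affineMap e.toAffineMap, hne.preimage e.surjective,
    fun Z₁ Z₂ h₁ h₂ hcover ↦ ?_⟩
  have preimage_subset_iff (Z : Set E) : e ⁻¹' W ⊆ Z ↔ W ⊆ e.symm ⁻¹' Z := by
    rw [← e.image_symm, Set.image_subset_iff]
  rw [preimage_subset_iff] at hcover
  simp only [preimage_subset_iff]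
  exact hirr _ _ (h₁.preimage_affineMap e.symm.toAffineMap)
    (h₂.preimage_affineMap e.symm.toAffineMap) hcover

theorem prod {W : Set E} {T : Set F} (hW : IsIrredVariety K W) (hT : IsIrredVariety K T) :
    IsIrredVariety K (W ×ˢ T) := by
  obtain ⟨hW_closed, hW_ne, hW_irr⟩ := hW
  obtain ⟨hT_closed, hT_ne, hT_irr⟩ := hT
  refine ⟨hW_closed.prod hT_closed, hW_ne.prod hT_ne, fun Z₁ Z₂ h₁ h₂ hcover ↦ ?_⟩
  have slice_subset : ∀ x ∈ W, (∀ y ∈ T, (x, y) ∈ Z₁) ∨ (∀ y ∈ T, (x, y) ∈ Z₂) := fun x hx ↦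
    hT_irr _ _ (h₁.preimage_prodMk_left x) (h₂.preimage_prodMk_left x)
      fun _ hy ↦ hcover ⟨hx, hy⟩
  simp only [Set.prod_subset_iff]
  exact hW_irr _ _ (h₁.setOf_forall_prodMk_mem T) (h₂.setOf_forall_prodMk_mem T) slice_subset

end IsIrredVariety

theorem product_of_irreducible_variety_is_irreducible_general {ι : Type*} [Finite ι]
    {E : ι → Type*} [∀ i, AddCommGroup (E i)] [∀ i, Module K (E i)] {W : ∀ i, Set (E i)}
    (hW : ∀ i, IsIrredVariety K (W i)) : IsIrredVariety K (Set.univ.pi W) := by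
  induction ι using Finite.induction_empty_option with
  | of_equiv e ih =>
    rw [← Equiv.piCongrLeft_symm_preimage_univ_pi e W]
    exact (ih fun i ↦ hW (e i)).preimage_affineEquiv
      (LinearEquiv.piCongrLeft K E e).symm.toAffineEquiv
  | h_empty =>
    rw [Set.univ_eq_empty_iff.2 inferInstance, Set.empty_pi]
    exact isIrredVariety_univ_of_subsingleton
  | h_option ih =>
    have pi_option : Set.univ.pi W = (LinearEquiv.piOptionEquivProd K) ⁻¹'
        (W none ×ˢ Set.univ.pi fun i ↦ W (some i)) := by
      ext x
      simp [Option.forall, LinearEquiv.piOptionEquivProd]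
    rw [pi_option]
    exact ((hW none).prod (ih fun i ↦ hW (some i))).preimage_affineEquiv
      (LinearEquiv.piOptionEquivProd K).toAffineEquiv

end ZariskiTopology

/-- If `V ⊆ 𝔸ⁿ_K` is an irreducible affine variety, the zero set of a prime ideal
`P ⊆ K[Y_1,…,Y_n]`, and `K` is algebraically closed or `P` is homogeneous, then for
every `r ≥ 1` the product `V^r ⊆ 𝔸^{rn}_K` is irreducible. -/
theorem product_of_irreducible_variety_is_irreducible
    {K : Type*} [Field K] (n : ℕ) (P : Ideal (MvPolynomial (Fin n) K)) (hP : P.IsPrime)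
    (V : Set (Fin n → K))
    (hV : V = {x | ∀ p ∈ P, MvPolynomial.eval x p = 0})
    (hirr : IsIrredVariety K V)
    (hyp : IsAlgClosed K ∨
      ∃ S : Set (MvPolynomial (Fin n) K),
        (∀ p ∈ S, ∃ m : ℕ, p.IsHomogeneous m) ∧ P = Ideal.span S)
    (r : ℕ) (hr : 1 ≤ r) :
    IsIrredVariety K {x : Fin r → Fin n → K | ∀ t, x t ∈ V} := by
  simpa only [Set.pi, Set.mem_univ, forall_const] using
    product_of_irreducible_variety_is_irreducible_general fun _ : Fin r ↦ hirr
end
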